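/- arXiv:2004.12686 — 8 statements merged into one kernel-verified Lean document; each statement's English description precedes it below -/
import Mathlib

section
/- Let ψ be a nonzero eigenvector of H_search with eigenvalue E ∈ ℝ such that E ≠ r·λ_i for every i. Then γ := ⟨w, ψ⟩ ≠ 0, the coefficients b_i := ⟨v_i, ψ⟩ satisfy b_i = γ·a_i/(E − r·λ_i) for every i, and the secular equation Σ_{i=1}^{n} |a_i|²/(E − r·λ_i) = 1 holds. -/
open Matrix BigOperators

/-!
Pair the eigenvalue equation of `T + |w⟩⟨w|` with an eigenvector `v` of the symmetric operator `T`: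
symmetry moves `T` onto `v`, leaving `(μ - λ) ⟪v, ψ⟫ = ⟪w, ψ⟫ ⟪v, w⟫`. Hence `⟪w, ψ⟫ = 0` would
annihilate every coefficient of `ψ`, and Parseval's identity
`⟪w, ψ⟫ = ∑ ⟪w, bᵢ⟫ ⟪bᵢ, ψ⟫ = ⟪w, ψ⟫ ∑ ‖⟪bᵢ, w⟫‖² / (μ - λᵢ)` gives the secular equation after
cancelling `⟪w, ψ⟫`.
-/

section RankOnePerturbation

open InnerProductSpace Module.End

variable {𝕜 E ι : Type*} [RCLike 𝕜] [NormedAddCommGroup E] [InnerProductSpace 𝕜 E]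

lemma sub_mul_inner_eq_of_eigenvector_add_rankOne {T : E →ₗ[𝕜] E} (hT : T.IsSymmetric)
    {v w ψ : E} {lam : ℝ} {μ : 𝕜} (hv : T v = (lam : 𝕜) • v)
    (hψ : (T + (rankOne 𝕜 w w).toLinearMap) ψ = μ • ψ) :
    (μ - lam) * ⟪v, ψ⟫_𝕜 = ⟪w, ψ⟫_𝕜 * ⟪v, w⟫_𝕜 := by
  have inner_map : ⟪v, T ψ⟫_𝕜 = lam * ⟪v, ψ⟫_𝕜 := by
    rw [← hT v ψ, hv, inner_smul_left, RCLike.conj_ofReal]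
  have paired : ⟪v, T ψ⟫_𝕜 + ⟪w, ψ⟫_𝕜 * ⟪v, w⟫_𝕜 = μ * ⟪v, ψ⟫_𝕜 := by
    simpa [inner_add_right, inner_smul_right] using congrArg (inner 𝕜 v) hψ
  linear_combination inner_map - paired

lemma inner_eq_div_of_eigenvector_add_rankOne {T : E →ₗ[𝕜] E} (hT : T.IsSymmetric)
    {v w ψ : E} {lam : ℝ} {μ : 𝕜} (hv : T v = (lam : 𝕜) • v)
    (hψ : (T + (rankOne 𝕜 w w).toLinearMap) ψ = μ • ψ) (hμ : μ ≠ lam) :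
    ⟪v, ψ⟫_𝕜 = ⟪w, ψ⟫_𝕜 * ⟪v, w⟫_𝕜 / (μ - lam) := by
  rw [eq_div_iff (sub_ne_zero.mpr hμ), mul_comm]
  exact sub_mul_inner_eq_of_eigenvector_add_rankOne hT hv hψ

lemma eq_zero_of_forall_inner_hilbertBasis_eq_zero (b : HilbertBasis ι 𝕜 E) {x : E}
    (hx : ∀ i, ⟪b i, x⟫_𝕜 = 0) : x = 0 := by
  refine b.repr.map_eq_zero_iff.mp (lp.ext (funext fun i => ?_))
  rw [b.repr_apply_apply, hx i]
  rfl

lemma inner_ne_zero_of_forall_inner_hilbertBasis_eq_div (b : HilbertBasis ι 𝕜 E) {w ψ : E}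
    {d : ι → 𝕜} (hψ : ψ ≠ 0) (hcoeff : ∀ i, ⟪b i, ψ⟫_𝕜 = ⟪w, ψ⟫_𝕜 * ⟪b i, w⟫_𝕜 / d i) :
    ⟪w, ψ⟫_𝕜 ≠ 0 := fun hγ =>
  hψ <| eq_zero_of_forall_inner_hilbertBasis_eq_zero b fun i => by
    rw [hcoeff i, hγ, zero_mul, zero_div]

lemma hasSum_norm_inner_sq_div_of_forall_inner_hilbertBasis_eq_div (b : HilbertBasis ι 𝕜 E)
    {w ψ : E} {d : ι → 𝕜} (hγ : ⟪w, ψ⟫_𝕜 ≠ 0)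
    (hcoeff : ∀ i, ⟪b i, ψ⟫_𝕜 = ⟪w, ψ⟫_𝕜 * ⟪b i, w⟫_𝕜 / d i) :
    HasSum (fun i => (‖⟪b i, w⟫_𝕜‖ : 𝕜) ^ 2 / d i) 1 := by
  have parseval_term (i : ι) :
      ⟪w, b i⟫_𝕜 * ⟪b i, ψ⟫_𝕜 = ⟪w, ψ⟫_𝕜 * ((‖⟪b i, w⟫_𝕜‖ : 𝕜) ^ 2 / d i) := by
    rw [hcoeff i, ← RCLike.conj_mul, inner_conj_symm]
    ring
  rw [← hasSum_mul_left_iff hγ, mul_one]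
  simpa only [parseval_term] using b.hasSum_inner_mul_inner w ψ

theorem secular_equation_of_eigenvector_general {T : E →ₗ[𝕜] E} (hT : T.IsSymmetric)
    (b : HilbertBasis ι 𝕜 E) {lam : ι → ℝ} (hb : ∀ i, T (b i) = (lam i : 𝕜) • b i)
    {w ψ : E} {r μ : ℝ}
    (hψ : HasEigenvector ((r : 𝕜) • T + (rankOne 𝕜 w w).toLinearMap) (μ : 𝕜) ψ)
    (hμ : ∀ i, μ ≠ r * lam i) :
    ⟪w, ψ⟫_𝕜 ≠ 0 ∧
    (∀ i, ⟪b i, ψ⟫_𝕜 = ⟪w, ψ⟫_𝕜 * ⟪b i, w⟫_𝕜 / ((μ : 𝕜) - r * lam i)) ∧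
    HasSum (fun i => ‖⟪b i, w⟫_𝕜‖ ^ 2 / (μ - r * lam i)) 1 := by
  have hrT : ((r : 𝕜) • T).IsSymmetric := hT.smul (RCLike.conj_ofReal r)
  have hrb (i : ι) : ((r : 𝕜) • T) (b i) = ((r * lam i : ℝ) : 𝕜) • b i := by
    rw [LinearMap.smul_apply, hb, smul_smul, RCLike.ofReal_mul]
  have hcoeff (i : ι) : ⟪b i, ψ⟫_𝕜 = ⟪w, ψ⟫_𝕜 * ⟪b i, w⟫_𝕜 / ((μ : 𝕜) - r * lam i) := by
    simpa only [RCLike.ofReal_mul] using inner_eq_div_of_eigenvector_add_rankOne hrT (hrb i)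
      hψ.apply_eq_smul (RCLike.ofReal_injective.ne (hμ i))
  have hγ := inner_ne_zero_of_forall_inner_hilbertBasis_eq_div b hψ.2 hcoeff
  refine ⟨hγ, hcoeff, (RCLike.hasSum_ofReal 𝕜).mp ?_⟩
  simpa using hasSum_norm_inner_sq_div_of_forall_inner_hilbertBasis_eq_div b hγ hcoeff

end RankOnePerturbation

section EuclideanSpace

open InnerProductSpace Module.End WithLp

variable {𝕜 ι : Type*} [RCLike 𝕜] [Fintype ι]

lemma inner_toLp_eq_star_dotProduct (x y : ι → 𝕜) :
    ⟪toLp 2 x, toLp 2 y⟫_𝕜 = star x ⬝ᵥ y := by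
  rw [EuclideanSpace.inner_toLp_toLp, dotProduct_comm]

variable [DecidableEq ι]

lemma exists_hilbertBasis_eq_toLp {v : ι → ι → 𝕜}
    (hv : ∀ i j, star (v i) ⬝ᵥ v j = if i = j then 1 else 0) :
    ∃ b : HilbertBasis ι 𝕜 (EuclideanSpace 𝕜 ι), ∀ i, b i = toLp 2 (v i) := by
  have horth : Orthonormal 𝕜 fun i => toLp 2 (v i) :=
    orthonormal_iff_ite.mpr fun i j => (inner_toLp_eq_star_dotProduct _ _).trans (hv i j)
  have hspan : Submodule.span 𝕜 (Set.range fun i => toLp 2 (v i)) = ⊤ :=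
    horth.linearIndependent.span_eq_top_of_card_eq_finrank' finrank_euclideanSpace.symm
  let b := OrthonormalBasis.mk horth hspan.ge
  exact ⟨b.toHilbertBasis, fun i => by rw [b.coe_toHilbertBasis, OrthonormalBasis.coe_mk]⟩

lemma toEuclideanLin_vecMulVec_star {κ : Type*} [Fintype κ] (x : κ → 𝕜) (y : ι → 𝕜) :
    toEuclideanLin (vecMulVec x (star y)) = rankOne 𝕜 (toLp 2 x) (toLp 2 y) := by
  rw [← LinearEquiv.eq_symm_apply, symm_toEuclideanLin_rankOne]

lemma toEuclideanLin_toLp_eq_smul {A : Matrix ι ι 𝕜} {μ : 𝕜} {x : ι → 𝕜}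
    (hA : A *ᵥ x = μ • x) : toEuclideanLin A (toLp 2 x) = μ • toLp 2 x := by
  rw [toLpLin_toLp, toLin'_apply, hA, toLp_smul]

lemma hasEigenvector_toEuclideanLin {A : Matrix ι ι 𝕜} {μ : 𝕜} {x : ι → 𝕜}
    (hx : x ≠ 0) (hA : A *ᵥ x = μ • x) : HasEigenvector (toEuclideanLin A) μ (toLp 2 x) :=
  ⟨mem_eigenspace_iff.mpr (toEuclideanLin_toLp_eq_smul hA), (toLp_eq_zero 2).not.mpr hx⟩

end EuclideanSpace

/-- Let `ψ` be a nonzero eigenvector of `H_search = r•H + |w⟩⟨w|` with real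
eigenvalue `E` such that `E ≠ r·λ i` for every `i`. Then `γ = ⟨w, ψ⟩ ≠ 0`, the coefficients
`b i = ⟨v i, ψ⟩` satisfy `b i = γ·a i/(E − r·λ i)`, and `∑ i, |a i|²/(E − r·λ i) = 1`. -/
theorem secular_equation_of_eigenvector
    (n : ℕ) (H : Matrix (Fin n) (Fin n) ℂ) (hH : H.IsHermitian)
    (v : Fin n → (Fin n → ℂ)) (lam : Fin n → ℝ) (hlam : Monotone lam)
    (hortho : ∀ i j, star (v i) ⬝ᵥ v j = if i = j then 1 else 0)
    (heig : ∀ i, H.mulVec (v i) = (lam i : ℂ) • v i)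
    (w : Fin n → ℂ) (hw : star w ⬝ᵥ w = 1)
    (a : Fin n → ℂ) (ha : ∀ i, a i = star (v i) ⬝ᵥ w)
    (r : ℝ)
    (Hs : Matrix (Fin n) (Fin n) ℂ)
    (hHs : Hs = (r : ℂ) • H + Matrix.vecMulVec w (star w))
    (ψ : Fin n → ℂ) (hψ : ψ ≠ 0)
    (E : ℝ) (heigψ : Hs.mulVec ψ = (E : ℂ) • ψ)
    (hE : ∀ i, E ≠ r * lam i) :
    star w ⬝ᵥ ψ ≠ 0 ∧
    (∀ i, star (v i) ⬝ᵥ ψ = (star w ⬝ᵥ ψ) * a i / ((E : ℂ) - (r : ℂ) * (lam i : ℂ))) ∧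
    ∑ i, ‖a i‖ ^ 2 / (E - r * lam i) = 1 := by
  obtain ⟨b, hb⟩ := exists_hilbertBasis_eq_toLp hortho
  have hHb (i : Fin n) : toEuclideanLin H (b i) = (lam i : ℂ) • b i :=
    hb i ▸ toEuclideanLin_toLp_eq_smul (heig i)
  have hHsψ := hasEigenvector_toEuclideanLin hψ heigψ
  rw [hHs, map_add, map_smul, toEuclideanLin_vecMulVec_star] at hHsψ
  obtain ⟨hγ, hcoeff, hsum⟩ := secular_equation_of_eigenvector_general
    (isSymmetric_toEuclideanLin_iff.mpr hH) b hHb hHsψ hE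
  simp only [hb, inner_toLp_eq_star_dotProduct, ← ha] at hγ hcoeff hsum
  exact ⟨hγ, hcoeff, (hasSum_fintype _).unique hsum⟩
end

section
/- Let E ∈ ℝ satisfy E ≠ r·λ_i for every i and Σ_{i=1}^{n} |a_i|²/(E − r·λ_i) = 1. Then the vector ψ := Σ_{i=1}^{n} (a_i/(E − r·λ_i))·v_i is nonzero and satisfies H_search ψ = E·ψ; in particular, E is an eigenvalue of H_search. -/
open Matrix BigOperators

/-!
The vector `ψ` is the resolvent `(E - r • H)⁻¹` applied to `w`, written in the eigenbasis of `H`, so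
`r • H` maps it to `E • ψ - w`. The secular equation says exactly that `⟨w, ψ⟩ = 1`. Hence the
rank-one term contributes `⟨w, ψ⟩ • w = w`, which restores `E • ψ`, and `ψ` cannot vanish.
-/

theorem hasEigenvector_add_smulRight {R M : Type*} [CommRing R] [Nontrivial R]
    [AddCommGroup M] [Module R M] {T : Module.End R M} {φ : Module.Dual R M} {E : R} {w ψ : M}
    (hT : T ψ = E • ψ - w) (hφ : φ ψ = 1) :
    Module.End.HasEigenvector (T + φ.smulRight w) E ψ := by
  refine ⟨Module.End.mem_eigenspace_iff.mpr ?_, ?_⟩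
  · rw [LinearMap.add_apply, LinearMap.smulRight_apply, hT, hφ, one_smul, sub_add_cancel]
  · rintro rfl
    exact zero_ne_one ((map_zero φ).symm.trans hφ)

section Eigenvectors

variable {K M : Type*} [Field K] [AddCommGroup M] [Module K M]

theorem map_sum_div_sub_smul_eq_smul_sub {ι : Type*} {s : Finset ι} {T : Module.End K M}
    {v : ι → M} {μ : ι → K} (hT : ∀ i ∈ s, T (v i) = μ i • v i) {E : K}
    (hE : ∀ i ∈ s, E ≠ μ i) (a : ι → K) :
    T (∑ i ∈ s, (a i / (E - μ i)) • v i) =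
      E • ∑ i ∈ s, (a i / (E - μ i)) • v i - ∑ i ∈ s, a i • v i := by
  rw [map_sum, Finset.smul_sum, ← Finset.sum_sub_distrib]
  refine Finset.sum_congr rfl fun i hi => ?_
  have hden : E - μ i ≠ 0 := sub_ne_zero.mpr (hE i hi)
  have hcoeff : a i / (E - μ i) * μ i = E * (a i / (E - μ i)) - a i := by
    field_simp
    ring
  rw [map_smul, hT i hi, smul_smul, hcoeff, sub_smul, mul_smul]

theorem hasEigenvector_add_smulRight_of_secular_equation {ι : Type*} {s : Finset ι}
    {T : Module.End K M} {v : ι → M} {μ : ι → K} (hT : ∀ i ∈ s, T (v i) = μ i • v i) {E : K}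
    (hE : ∀ i ∈ s, E ≠ μ i) {φ : Module.Dual K M} {a : ι → K}
    (hsec : ∑ i ∈ s, a i * φ (v i) / (E - μ i) = 1) :
    Module.End.HasEigenvector (T + φ.smulRight (∑ i ∈ s, a i • v i)) E
      (∑ i ∈ s, (a i / (E - μ i)) • v i) := by
  refine hasEigenvector_add_smulRight (map_sum_div_sub_smul_eq_smul_sub hT hE a) ?_
  simpa only [map_sum, map_smul, smul_eq_mul, div_mul_eq_mul_div] using hsec

end Eigenvectors

section DotProduct

variable {ι R : Type*} [Fintype ι] [DecidableEq ι] [CommSemiring R]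

theorem toLin'_vecMulVec_eq_smulRight (w u : ι → R) :
    toLin' (vecMulVec w u) = (dotProductBilin R R u).smulRight w := by
  refine LinearMap.ext fun x => ?_
  simp [vecMulVec_mulVec]

theorem sum_dotProduct_smul_eq_of_biorthogonal {u v : ι → ι → R}
    (huv : ∀ i j, u i ⬝ᵥ v j = if i = j then 1 else 0) (w : ι → R) :
    ∑ i, (u i ⬝ᵥ w) • v i = w := by
  have hright : of u * (of v)ᵀ = 1 := by
    ext i j
    exact huv i j
  have hleft : (of v)ᵀ * of u = 1 := mul_eq_one_comm.mp hright
  calc ∑ i, (u i ⬝ᵥ w) • v i = (of u *ᵥ w) ᵥ* of v := (vecMul_eq_sum _ _).symm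
    _ = ((of v)ᵀ * of u) *ᵥ w := by rw [← mulVec_transpose, mulVec_mulVec]
    _ = w := by rw [hleft, one_mulVec]

end DotProduct

theorem sum_mul_star_div_ofReal {𝕜 ι : Type*} [RCLike 𝕜] (s : Finset ι) (a : ι → 𝕜) (d : ι → ℝ) :
    ∑ i ∈ s, a i * star (a i) / (d i : 𝕜) = ((∑ i ∈ s, ‖a i‖ ^ 2 / d i : ℝ) : 𝕜) := by
  push_cast
  exact Finset.sum_congr rfl fun i _ => congrArg (· / (d i : 𝕜)) (RCLike.mul_conj (a i))

theorem eigenvector_of_secular_equation_general {K ι : Type*} [Field K] [StarRing K] [Fintype ι]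
    [DecidableEq ι] {H : Matrix ι ι K} {v : ι → ι → K} {lam : ι → K}
    (hortho : ∀ i j, star (v i) ⬝ᵥ v j = if i = j then 1 else 0)
    (heig : ∀ i, H *ᵥ v i = lam i • v i) {w : ι → K} {a : ι → K}
    (ha : ∀ i, a i = star (v i) ⬝ᵥ w) {r E : K} (hE : ∀ i, E ≠ r * lam i)
    (hsec : ∑ i, a i * star (a i) / (E - r * lam i) = 1) :
    Module.End.HasEigenvector (toLin' (r • H + vecMulVec w (star w))) E
      (∑ i, (a i / (E - r * lam i)) • v i) := by
  have hexpand : ∑ i, a i • v i = w := by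
    simpa only [ha] using sum_dotProduct_smul_eq_of_biorthogonal hortho w
  have hcoeff (i : ι) : star w ⬝ᵥ v i = star (a i) := by
    rw [ha, star_dotProduct]
  have hsmul (i : ι) : toLin' (r • H) (v i) = (r * lam i) • v i := by
    rw [toLin'_apply, smul_mulVec, heig, smul_smul]
  have hev := hasEigenvector_add_smulRight_of_secular_equation (s := Finset.univ)
    (φ := dotProductBilin K K (star w)) (a := a) (fun i _ => hsmul i) (fun i _ => hE i)
    (by simpa [hcoeff] using hsec)
  rwa [hexpand, ← toLin'_vecMulVec_eq_smulRight, ← map_add] at hev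

/-- If a real number `E` avoids all values `r·λ i` and satisfies the secular
equation `∑ i, |a i|²/(E − r·λ i) = 1`, then `ψ = ∑ i (a i/(E − r·λ i))·v i` is a nonzero
eigenvector of `H_search = r•H + |w⟩⟨w|` with eigenvalue `E`; in particular `E` is an
eigenvalue of `H_search`. -/
theorem eigenvector_of_secular_equation
    (n : ℕ) (H : Matrix (Fin n) (Fin n) ℂ) (hH : H.IsHermitian)
    (v : Fin n → (Fin n → ℂ)) (lam : Fin n → ℝ) (hlam : Monotone lam)
    (hortho : ∀ i j, star (v i) ⬝ᵥ v j = if i = j then 1 else 0)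
    (heig : ∀ i, H.mulVec (v i) = (lam i : ℂ) • v i)
    (w : Fin n → ℂ) (hw : star w ⬝ᵥ w = 1)
    (a : Fin n → ℂ) (ha : ∀ i, a i = star (v i) ⬝ᵥ w)
    (r : ℝ)
    (Hs : Matrix (Fin n) (Fin n) ℂ)
    (hHs : Hs = (r : ℂ) • H + Matrix.vecMulVec w (star w))
    (E : ℝ) (hE : ∀ i, E ≠ r * lam i)
    (hsec : ∑ i, ‖a i‖ ^ 2 / (E - r * lam i) = 1)
    (ψ : Fin n → ℂ)
    (hψdef : ψ = ∑ i, (a i / ((E : ℂ) - (r : ℂ) * (lam i : ℂ))) • v i) :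
    ψ ≠ 0 ∧ Hs.mulVec ψ = (E : ℂ) • ψ ∧
      Module.End.HasEigenvalue (Matrix.toLin' Hs) (E : ℂ) := by
  have hev : Module.End.HasEigenvector (toLin' Hs) (E : ℂ) ψ := by
    rw [hHs, hψdef]
    exact eigenvector_of_secular_equation_general hortho heig ha (fun i => mod_cast hE i)
      (by simpa [hsec] using sum_mul_star_div_ofReal Finset.univ a fun i => E - r * lam i)
  exact ⟨hev.2, hev.apply_eq_smul, Module.End.hasEigenvalue_of_hasEigenvector hev⟩
end

section
/- Assume r > 0, the eigenvalues of H are simple (λ_1 < λ_2 < … < λ_n), and a_i ≠ 0 for every i. Then all n eigenvalues of H_search are simple, and when ordered as E_1 < E_2 < … < E_n they interlace the scaled spectrum of H: r·λ_i < E_i < r·λ_{i+1} for every 1 ≤ i ≤ n−1, and E_n > r·λ_n. -/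
open Matrix BigOperators

/-!
In an eigenbasis `v` of `T` with eigenvalues `μ`, a number `x` outside the spectrum of `T` is an
eigenvalue of `T + |w⟩⟨w|` as soon as it solves the secular equation
`∑ i, |⟨v i, w⟩|² / (x - μ i) = 1`, with eigenvector the resolvent vector `(x - T)⁻¹ w`. When all
overlaps are nonzero, the left-hand side runs from `+∞` to `-∞` between consecutive poles and
from `+∞` to `0` beyond the last one, so there is a root to the right of each `μ i` and before the
next pole. These are as many distinct eigenvalues as the dimension, and eigenvectors of a symmetric
operator for distinct eigenvalues are orthogonal.
-/

open Filter Set Topology InnerProductSpace Module.End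

section SecularFunction

variable {ι : Type*} [Fintype ι] {c μ : ι → ℝ}

/-- The secular function `x ↦ ∑ j, c j / (x - μ j)` with weights `c` and poles `μ`. Away from the
poles, the solutions of `secularFunction c μ x = 1` are eigenvalues of a rank-one perturbation;
at a pole `μ j`, division by zero makes the term of index `j` vanish. -/
noncomputable def secularFunction (c μ : ι → ℝ) (x : ℝ) : ℝ :=
  ∑ j, c j / (x - μ j)

lemma continuousOn_secularFunction {s : Set ℝ} (hs : ∀ j, μ j ∉ s) :
    ContinuousOn (secularFunction c μ) s :=
  continuousOn_finsetSum _ fun j _ ↦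
    continuousOn_const.div (by fun_prop) fun _ hx ↦ sub_ne_zero.2 fun h ↦ hs j (h ▸ hx)

lemma tendsto_secularFunction_atTop : Tendsto (secularFunction c μ) atTop (𝓝 0) := by
  have tendsto_term (j : ι) : Tendsto (fun x ↦ c j / (x - μ j)) atTop (𝓝 0) :=
    (tendsto_atTop_add_const_right _ (-μ j) tendsto_id).const_div_atTop (c j)
  simpa only [Finset.sum_const_zero] using! tendsto_finsetSum Finset.univ fun j _ ↦ tendsto_term j

lemma exists_secularFunction_eq_pole_add (hμ : Function.Injective μ) (i : ι) :
    ∃ g : ℝ → ℝ, ContinuousAt g (μ i) ∧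
      secularFunction c μ = fun x ↦ c i * (x - μ i)⁻¹ + g x := by
  classical
  refine ⟨fun x ↦ ∑ j ∈ Finset.univ.erase i, c j / (x - μ j),
    tendsto_finsetSum _ fun j hj ↦ ?_, funext fun x ↦ ?_⟩
  · exact continuousAt_const.div (by fun_prop)
      (sub_ne_zero.2 (hμ.ne (Finset.ne_of_mem_erase hj).symm))
  · rw [secularFunction, ← Finset.add_sum_erase _ _ (Finset.mem_univ i), div_eq_mul_inv]

lemma tendsto_secularFunction_nhdsGT (hμ : Function.Injective μ) {i : ι} (hc : 0 < c i) :
    Tendsto (secularFunction c μ) (𝓝[>] μ i) atTop := by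
  obtain ⟨g, hg, h_eq⟩ := exists_secularFunction_eq_pole_add (c := c) hμ i
  have tendsto_sub : Tendsto (fun x ↦ x - μ i) (𝓝[>] μ i) (𝓝[>] 0) := by
    rw [Tendsto, map_subRight_nhdsGT, sub_self]
  rw [h_eq]
  exact ((tendsto_inv_nhdsGT_zero.comp tendsto_sub).const_mul_atTop hc).atTop_add
    (hg.tendsto.mono_left nhdsWithin_le_nhds)

lemma tendsto_secularFunction_nhdsLT (hμ : Function.Injective μ) {i : ι} (hc : 0 < c i) :
    Tendsto (secularFunction c μ) (𝓝[<] μ i) atBot := by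
  obtain ⟨g, hg, h_eq⟩ := exists_secularFunction_eq_pole_add (c := c) hμ i
  have tendsto_sub : Tendsto (fun x ↦ x - μ i) (𝓝[<] μ i) (𝓝[<] 0) := by
    rw [Tendsto, map_subRight_nhdsLT, sub_self]
  rw [h_eq]
  exact ((tendsto_inv_nhdsLT_zero.comp tendsto_sub).const_mul_atBot hc).atBot_add
    (hg.tendsto.mono_left nhdsWithin_le_nhds)

lemma exists_mem_Ioo_secularFunction_eq (hμ : Function.Injective μ) {i j : ι} (hij : μ i < μ j)
    (hgap : ∀ k, μ k ∉ Ioo (μ i) (μ j)) (hi : 0 < c i) (hj : 0 < c j) (y : ℝ) :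
    ∃ x ∈ Ioo (μ i) (μ j), secularFunction c μ x = y :=
  isPreconnected_Ioo.intermediate_value_Iii (le_principal_iff.2 (Ioo_mem_nhdsLT hij))
    (le_principal_iff.2 (Ioo_mem_nhdsGT hij)) (continuousOn_secularFunction hgap)
    (tendsto_secularFunction_nhdsLT hμ hj) (tendsto_secularFunction_nhdsGT hμ hi) (mem_univ y)

lemma exists_mem_Ioi_secularFunction_eq (hμ : Function.Injective μ) {i : ι}
    (hmax : ∀ k, μ k ≤ μ i) (hi : 0 < c i) {y : ℝ} (hy : 0 < y) :
    ∃ x ∈ Ioi (μ i), secularFunction c μ x = y :=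
  isPreconnected_Ioi.intermediate_value_Ioi (le_principal_iff.2 (Ioi_mem_atTop _))
    (le_principal_iff.2 self_mem_nhdsWithin)
    (continuousOn_secularFunction fun k ↦ (hmax k).not_gt) tendsto_secularFunction_atTop
    (tendsto_secularFunction_nhdsGT hμ hi) hy

lemma exists_interlacing_secularFunction_eq [LinearOrder ι] (hμ : StrictMono μ)
    (hc : ∀ i, 0 < c i) {y : ℝ} (hy : 0 < y) :
    ∃ E : ι → ℝ, (∀ i, secularFunction c μ (E i) = y) ∧ (∀ i, μ i < E i) ∧
      ∀ i j, i < j → E i < μ j := by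
  have exists_root (i : ι) :
      ∃ x, secularFunction c μ x = y ∧ μ i < x ∧ ∀ j, i < j → x < μ j := by
    by_cases hi : IsMax i
    · obtain ⟨x, hx, hxy⟩ := exists_mem_Ioi_secularFunction_eq hμ.injective
        (fun k ↦ hμ.monotone (hi.isTop k)) (hc i) hy
      exact ⟨x, hxy, hx, fun j hij ↦ absurd hij hi.not_lt⟩
    · obtain ⟨k, hik⟩ := exists_covBy_of_wellFoundedLT hi
      obtain ⟨x, hx, hxy⟩ := exists_mem_Ioo_secularFunction_eq hμ.injective (hμ hik.lt)
        (fun l hl ↦ hik.2 (hμ.lt_iff_lt.1 hl.1) (hμ.lt_iff_lt.1 hl.2)) (hc i) (hc k) y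
      exact ⟨x, hxy, hx.1, fun j hij ↦ hx.2.trans_le (hμ.monotone (hik.ge_of_gt hij))⟩
  choose E hE using exists_root
  exact ⟨E, fun i ↦ (hE i).1, fun i ↦ (hE i).2.1, fun i ↦ (hE i).2.2⟩

end SecularFunction

section RankOnePerturbation

variable {𝕜 V ι : Type*} [RCLike 𝕜] [NormedAddCommGroup V] [InnerProductSpace 𝕜 V]
  {T : V →ₗ[𝕜] V} {μ : ι → ℝ}

lemma exists_orthonormal_eigenvectors (hT : T.IsSymmetric) (hμ : Function.Injective μ)
    (hμT : ∀ i, HasEigenvalue T (μ i : 𝕜)) :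
    ∃ ψ : ι → V, Orthonormal 𝕜 ψ ∧ ∀ i, T (ψ i) = (μ i : 𝕜) • ψ i := by
  choose u hu using fun i ↦ (hμT i).exists_hasEigenvector
  have mem_eigenspace (i : ι) : ((‖u i‖⁻¹ : ℝ) : 𝕜) • u i ∈ eigenspace T (μ i : 𝕜) :=
    Submodule.smul_mem _ _ (hu i).1
  refine ⟨fun i ↦ ((‖u i‖⁻¹ : ℝ) : 𝕜) • u i, ⟨fun i ↦ ?_, fun i j hij ↦ ?_⟩,
    fun i ↦ mem_eigenspace_iff.1 (mem_eigenspace i)⟩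
  · simpa using norm_smul_inv_norm (𝕜 := 𝕜) (hu i).2
  · exact hT.orthogonalFamily_eigenspaces.pairwise (RCLike.ofReal_injective.ne (hμ.ne hij.symm))
      (mem_eigenspace j) _ (mem_eigenspace i)

variable [Fintype ι]

/-- The vector `∑ i, (x - μ i)⁻¹ ⟨v i, w⟩ v i`, which is `(x - T)⁻¹ w` for the operator `T` with
eigenbasis `v` and eigenvalues `μ`, provided that `x` is none of the `μ i`. -/
noncomputable def resolventVector (v : OrthonormalBasis ι 𝕜 V) (μ : ι → ℝ) (w : V) (x : ℝ) : V :=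
  ∑ i, (((x - μ i)⁻¹ : ℝ) * ⟪v i, w⟫_𝕜) • v i

variable {v : OrthonormalBasis ι 𝕜 V}

lemma inner_resolventVector (w : V) (x : ℝ) :
    ⟪w, resolventVector v μ w x⟫_𝕜 =
      (secularFunction (fun i ↦ ‖⟪v i, w⟫_𝕜‖ ^ 2) μ x : 𝕜) := by
  simp only [resolventVector, secularFunction, inner_sum, inner_smul_right, RCLike.ofReal_sum]
  refine Finset.sum_congr rfl fun i _ ↦ ?_
  rw [mul_assoc, ← inner_conj_symm w, RCLike.mul_conj, div_eq_inv_mul]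
  push_cast
  rfl

lemma isSymmetric_of_apply_orthonormalBasis (hv : ∀ i, T (v i) = (μ i : 𝕜) • v i) :
    T.IsSymmetric := by
  have spectral_decomposition : T = ∑ i, (μ i : 𝕜) • (rankOne 𝕜 (v i) (v i)).toLinearMap := by
    classical
    refine v.toBasis.ext fun j ↦ ?_
    simp [hv, v.inner_eq_ite]
  rw [spectral_decomposition]
  exact LinearMap.isSymmetric_sum _ fun i _ ↦
    (isSymmetric_rankOne_self (v i)).smul (RCLike.conj_ofReal _)

lemma apply_resolventVector (hv : ∀ i, T (v i) = (μ i : 𝕜) • v i) (w : V) {x : ℝ}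
    (hx : ∀ i, x ≠ μ i) :
    T (resolventVector v μ w x) = (x : 𝕜) • resolventVector v μ w x - w := by
  have coeff_eq (i : ι) : (((x - μ i)⁻¹ : ℝ) * ⟪v i, w⟫_𝕜) * (μ i : 𝕜) =
      x * (((x - μ i)⁻¹ : ℝ) * ⟪v i, w⟫_𝕜) - ⟪v i, w⟫_𝕜 := by
    have x_sub_ne_zero : (x : 𝕜) - μ i ≠ 0 := by exact_mod_cast sub_ne_zero.2 (hx i)
    push_cast
    field_simp
    ring
  nth_rewrite 3 [← v.sum_repr' w]
  simp only [resolventVector, map_sum, map_smul, hv, smul_smul, coeff_eq, sub_smul,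
    Finset.sum_sub_distrib, Finset.smul_sum]

lemma hasEigenvalue_add_rankOne (hv : ∀ i, T (v i) = (μ i : 𝕜) • v i) {w : V} {x : ℝ}
    (hx : ∀ i, x ≠ μ i) (hsec : secularFunction (fun i ↦ ‖⟪v i, w⟫_𝕜‖ ^ 2) μ x = 1) :
    HasEigenvalue (T + (rankOne 𝕜 w w).toLinearMap) (x : 𝕜) := by
  have inner_eq_one : ⟪w, resolventVector v μ w x⟫_𝕜 = 1 := by
    rw [inner_resolventVector, hsec, RCLike.ofReal_one]
  refine hasEigenvalue_of_hasEigenvector (x := resolventVector v μ w x)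
    ⟨mem_eigenspace_iff.2 ?_, fun h ↦ ?_⟩
  · simp [apply_resolventVector hv w hx, inner_eq_one]
  · simp [h] at inner_eq_one

lemma exists_interlacing_hasEigenvalue_add_rankOne [LinearOrder ι] (hμ : StrictMono μ)
    (hv : ∀ i, T (v i) = (μ i : 𝕜) • v i) {w : V} (hw : ∀ i, ⟪v i, w⟫_𝕜 ≠ 0) :
    ∃ E : ι → ℝ, (∀ i, HasEigenvalue (T + (rankOne 𝕜 w w).toLinearMap) (E i : 𝕜)) ∧
      (∀ i, μ i < E i) ∧ ∀ i j, i < j → E i < μ j := by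
  obtain ⟨E, hsec, hlt, hgt⟩ := exists_interlacing_secularFunction_eq
    (c := fun i ↦ ‖⟪v i, w⟫_𝕜‖ ^ 2) hμ (fun i ↦ by have := hw i; positivity) one_pos
  have ne_pole (i j : ι) : E i ≠ μ j := by
    rcases lt_or_ge i j with hij | hji
    · exact (hgt i j hij).ne
    · exact ((hμ.monotone hji).trans_lt (hlt i)).ne'
  exact ⟨E, fun i ↦ hasEigenvalue_add_rankOne hv (ne_pole i) (hsec i), hlt, hgt⟩

end RankOnePerturbation

section Matrix

variable {𝕜 m : Type*} [RCLike 𝕜] [Fintype m]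

lemma orthonormal_toLp_iff {ι : Type*} [DecidableEq ι] {v : ι → m → 𝕜} :
    Orthonormal 𝕜 (fun i ↦ WithLp.toLp 2 (v i)) ↔
      ∀ i j, star (v i) ⬝ᵥ v j = if i = j then 1 else 0 := by
  simp only [orthonormal_iff_ite, EuclideanSpace.inner_toLp_toLp, dotProduct_comm]

lemma exists_orthonormalBasis_eq_toLp [DecidableEq m] {v : m → m → 𝕜}
    (hv : ∀ i j, star (v i) ⬝ᵥ v j = if i = j then 1 else 0) :
    ∃ b : OrthonormalBasis m 𝕜 (EuclideanSpace 𝕜 m), ∀ i, b i = WithLp.toLp 2 (v i) := by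
  have hv_orthonormal := orthonormal_toLp_iff.2 hv
  have span_eq_top := hv_orthonormal.linearIndependent.span_eq_top_of_card_eq_finrank'
    finrank_euclideanSpace.symm
  exact ⟨.mk hv_orthonormal span_eq_top.ge, fun i ↦ by rw [OrthonormalBasis.coe_mk]⟩

lemma toEuclideanLin_vecMulVec_star_s3 {n : Type*} [Fintype n] [DecidableEq n] (u : m → 𝕜)
    (w : n → 𝕜) :
    (vecMulVec u (star w)).toEuclideanLin =
      (rankOne 𝕜 (WithLp.toLp 2 u) (WithLp.toLp 2 w)).toLinearMap :=
  ((LinearEquiv.symm_apply_eq _).1 (symm_toEuclideanLin_rankOne _ _)).symm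

lemma toEuclideanLin_toLp_eq_smul_iff [DecidableEq m] {A : Matrix m m 𝕜} {u : m → 𝕜} {x : 𝕜} :
    A.toEuclideanLin (WithLp.toLp 2 u) = x • WithLp.toLp 2 u ↔ A *ᵥ u = x • u := by
  rw [toLpLin_toLp, toLin'_apply, ← WithLp.toLp_smul, (WithLp.toLp_injective 2).eq_iff]

end Matrix

theorem interlacing_of_search_hamiltonian_general {𝕜 ι : Type*} [RCLike 𝕜] [Fintype ι]
    [LinearOrder ι] {A : Matrix ι ι 𝕜} {v : ι → ι → 𝕜} {μ : ι → ℝ} (hμ : StrictMono μ)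
    (hortho : ∀ i j, star (v i) ⬝ᵥ v j = if i = j then 1 else 0)
    (heig : ∀ i, A *ᵥ v i = (μ i : 𝕜) • v i) {w : ι → 𝕜} (hw : ∀ i, star (v i) ⬝ᵥ w ≠ 0) :
    ∃ (E : ι → ℝ) (ψ : ι → ι → 𝕜),
      StrictMono E ∧
      (∀ α β, star (ψ α) ⬝ᵥ ψ β = if α = β then 1 else 0) ∧
      (∀ α, (A + vecMulVec w (star w)) *ᵥ ψ α = (E α : 𝕜) • ψ α) ∧
      (∀ i, μ i < E i) ∧ ∀ i j, i < j → E i < μ j := by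
  obtain ⟨b, hb⟩ := exists_orthonormalBasis_eq_toLp hortho
  have hAb (i : ι) : A.toEuclideanLin (b i) = (μ i : 𝕜) • b i := by
    rw [hb, toEuclideanLin_toLp_eq_smul_iff, heig]
  have hbw (i : ι) : ⟪b i, WithLp.toLp 2 w⟫_𝕜 ≠ 0 := by
    rw [hb, EuclideanSpace.inner_toLp_toLp, dotProduct_comm]
    exact hw i
  obtain ⟨E, hE, hlt, hgt⟩ := exists_interlacing_hasEigenvalue_add_rankOne hμ hAb hbw
  have E_strictMono : StrictMono E := fun i j hij ↦ (hgt i j hij).trans (hlt j)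
  obtain ⟨ψ, hψ, hψE⟩ := exists_orthonormal_eigenvectors
    ((isSymmetric_of_apply_orthonormalBasis hAb).add (isSymmetric_rankOne_self _))
    E_strictMono.injective hE
  refine ⟨E, fun i ↦ (ψ i).ofLp, E_strictMono, orthonormal_toLp_iff.1 hψ, fun i ↦ ?_, hlt, hgt⟩
  rw [← toEuclideanLin_toLp_eq_smul_iff, map_add, toEuclideanLin_vecMulVec_star_s3]
  exact hψE i

/-- If `r > 0`, the eigenvalues of `H` are simple and `a i ≠ 0` for every `i`,
then all `n` eigenvalues of `H_search = r•H + |w⟩⟨w|` are simple (there is an orthonormal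
eigenbasis with strictly increasing eigenvalues `E`), and they interlace the scaled spectrum of
`H`: `r·λ i < E i` for every `i` (in particular `E n > r·λ n` for the top index) and
`E i < r·λ (i+1)` for every `i ≤ n−1`. -/
theorem interlacing_of_search_hamiltonian
    (n : ℕ) (H : Matrix (Fin (n + 1)) (Fin (n + 1)) ℂ) (hH : H.IsHermitian)
    (v : Fin (n + 1) → (Fin (n + 1) → ℂ)) (lam : Fin (n + 1) → ℝ)
    (hlam : StrictMono lam)
    (hortho : ∀ i j, star (v i) ⬝ᵥ v j = if i = j then 1 else 0)
    (heig : ∀ i, H.mulVec (v i) = (lam i : ℂ) • v i)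
    (w : Fin (n + 1) → ℂ) (hw : star w ⬝ᵥ w = 1)
    (a : Fin (n + 1) → ℂ) (ha : ∀ i, a i = star (v i) ⬝ᵥ w)
    (hane : ∀ i, a i ≠ 0)
    (r : ℝ) (hr : 0 < r)
    (Hs : Matrix (Fin (n + 1)) (Fin (n + 1)) ℂ)
    (hHs : Hs = (r : ℂ) • H + Matrix.vecMulVec w (star w)) :
    ∃ (E : Fin (n + 1) → ℝ) (ψ : Fin (n + 1) → (Fin (n + 1) → ℂ)),
      StrictMono E ∧
      (∀ α β, star (ψ α) ⬝ᵥ ψ β = if α = β then 1 else 0) ∧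
      (∀ α, Hs.mulVec (ψ α) = (E α : ℂ) • ψ α) ∧
      (∀ i, r * lam i < E i) ∧
      (∀ (i : Fin (n + 1)) (h : (i : ℕ) + 1 < n + 1), E i < r * lam ⟨(i : ℕ) + 1, h⟩) := by
  obtain ⟨E, ψ, hE, hψ, hHψ, hlt, hgt⟩ := interlacing_of_search_hamiltonian_general
    (A := (r : ℂ) • H) (hlam.const_mul hr) hortho
    (fun i ↦ by rw [smul_mulVec, heig, smul_smul, RCLike.ofReal_mul]; rfl) fun i ↦ ha i ▸ hane i
  exact ⟨E, ψ, hE, hψ, hHs ▸ hHψ, hlt, fun i h ↦ hgt i ⟨i + 1, h⟩ (Nat.lt_succ_self _)⟩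
end

section
/- Assume H_search admits an orthonormal eigenbasis ψ_1,…,ψ_n with real eigenvalues E_1,…,E_n such that E_α ≠ r·λ_i for all α and i, and set γ_α = ⟨w, ψ_α⟩. Then for every t ∈ ℝ, ⟨w, exp(−i t H_search) v_n⟩ = conj(a_n) · Σ_{α=1}^{n} |γ_α|² e^{−i t E_α}/(E_α − r·λ_n), where exp denotes the matrix exponential. -/
open Matrix BigOperators

/-!
Pair a left eigenvector `u` of `A + x yᵀ` (eigenvalue `ε`) with a right eigenvector `v` of `A`
(eigenvalue `μ`): evaluating `u (A + x yᵀ) v` in two ways gives `(ε - μ) (u ⬝ v) = (u ⬝ x) (y ⬝ v)`.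
With `x = w` and `y = star w` this yields the coefficients of `v` in the eigenbasis of the perturbed
matrix, and the exponential acts diagonally in that basis.
-/

section Eigenvectors

variable {ι R : Type*} [Fintype ι] [CommRing R]

theorem sub_mul_dotProduct_of_add_vecMulVec {A : Matrix ι ι R} {u v x y : ι → R} {ε μ : R}
    (hu : u ᵥ* (A + vecMulVec x y) = ε • u) (hv : A *ᵥ v = μ • v) :
    (ε - μ) * (u ⬝ᵥ v) = (u ⬝ᵥ x) * (y ⬝ᵥ v) := by
  have eval_left : u ⬝ᵥ ((A + vecMulVec x y) *ᵥ v) = ε * (u ⬝ᵥ v) := by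
    rw [dotProduct_mulVec, hu, smul_dotProduct, smul_eq_mul]
  have eval_right : u ⬝ᵥ ((A + vecMulVec x y) *ᵥ v) = μ * (u ⬝ᵥ v) + (u ⬝ᵥ x) * (y ⬝ᵥ v) := by
    simp only [add_mulVec, hv, vecMulVec_mulVec, op_smul_eq_smul, dotProduct_add, dotProduct_smul,
      smul_eq_mul, mul_comm (y ⬝ᵥ v)]
  linear_combination eval_right - eval_left

variable [DecidableEq ι]

theorem pow_mulVec_of_mulVec_eq_smul {A : Matrix ι ι R} {v : ι → R} {μ : R}
    (hv : A *ᵥ v = μ • v) (k : ℕ) : (A ^ k) *ᵥ v = μ ^ k • v := by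
  induction k with
  | zero => simp
  | succ k ih => rw [pow_succ, ← mulVec_mulVec, hv, mulVec_smul, ih, smul_smul, pow_succ']

variable [StarRing R] {ψ : ι → ι → R} {M : Matrix ι ι R} {E : ι → R}

theorem sum_star_dotProduct_smul_of_orthonormal
    (hψ : ∀ α β, star (ψ α) ⬝ᵥ ψ β = if α = β then 1 else 0) (x : ι → R) :
    ∑ α, (star (ψ α) ⬝ᵥ x) • ψ α = x := by
  let U : Matrix ι ι R := (of ψ)ᵀ
  have unitary_left : Uᴴ * U = 1 := by
    ext α β
    rw [one_apply, ← hψ α β]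
    rfl
  calc ∑ α, (star (ψ α) ⬝ᵥ x) • ψ α = U *ᵥ (Uᴴ *ᵥ x) := by
        rw [mulVec_eq_sum]
        simp only [op_smul_eq_smul]
        rfl
    _ = x := by rw [mulVec_mulVec, mul_eq_one_comm.mp unitary_left, one_mulVec]

theorem dotProduct_mulVec_eq_sum_of_orthonormal
    (hψ : ∀ α β, star (ψ α) ⬝ᵥ ψ β = if α = β then 1 else 0)
    (hM : ∀ α, M *ᵥ ψ α = E α • ψ α) (y x : ι → R) :
    y ⬝ᵥ (M *ᵥ x) = ∑ α, (y ⬝ᵥ ψ α) * E α * (star (ψ α) ⬝ᵥ x) := by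
  conv_lhs => rw [← sum_star_dotProduct_smul_of_orthonormal hψ x]
  simp only [mulVec_sum, mulVec_smul, hM, dotProduct_sum, dotProduct_smul, smul_eq_mul]
  exact Finset.sum_congr rfl fun α _ => by ring

theorem star_vecMul_eq_smul_of_orthonormal
    (hψ : ∀ α β, star (ψ α) ⬝ᵥ ψ β = if α = β then 1 else 0)
    (hM : ∀ α, M *ᵥ ψ α = E α • ψ α) (α : ι) :
    star (ψ α) ᵥ* M = E α • star (ψ α) := by
  refine dotProduct_eq _ _ fun x => ?_
  rw [← dotProduct_mulVec, dotProduct_mulVec_eq_sum_of_orthonormal hψ hM]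
  simp [hψ]

end Eigenvectors

section Exponential

variable {ι 𝕜 : Type*} [Fintype ι] [DecidableEq ι] [RCLike 𝕜]

theorem exp_mulVec_of_mulVec_eq_smul {A : Matrix ι ι 𝕜} {v : ι → 𝕜} {μ : 𝕜}
    (hv : A *ᵥ v = μ • v) : NormedSpace.exp A *ᵥ v = NormedSpace.exp μ • v := by
  have matrix_series :
      HasSum (fun k : ℕ => ((k.factorial : 𝕜)⁻¹ • A ^ k) *ᵥ v) (NormedSpace.exp A *ᵥ v) :=
    open scoped Matrix.Norms.Operator in
    (NormedSpace.exp_series_hasSum_exp' (𝕂 := 𝕜) A).map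
      (mulVec.addMonoidHomLeft v) (continuous_id.matrix_mulVec continuous_const)
  have scalar_series :
      HasSum (fun k : ℕ => ((k.factorial : 𝕜)⁻¹ • μ ^ k) • v) (NormedSpace.exp μ • v) :=
    (NormedSpace.exp_series_hasSum_exp' μ).smul_const v
  refine matrix_series.unique (scalar_series.congr_fun fun k => ?_)
  rw [smul_mulVec, pow_mulVec_of_mulVec_eq_smul hv, smul_assoc]

theorem amplitude_formula_general {A : Matrix ι ι 𝕜} {v w : ι → 𝕜} {μ : 𝕜}
    (hv : A *ᵥ v = μ • v) {ψ : ι → ι → 𝕜} {E : ι → 𝕜}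
    (hψ : ∀ α β, star (ψ α) ⬝ᵥ ψ β = if α = β then 1 else 0)
    (hE : ∀ α, (A + vecMulVec w (star w)) *ᵥ ψ α = E α • ψ α)
    (hne : ∀ α, E α ≠ μ) (c : 𝕜) :
    star w ⬝ᵥ (NormedSpace.exp (c • (A + vecMulVec w (star w))) *ᵥ v) =
      (star w ⬝ᵥ v) *
        ∑ α, (‖star w ⬝ᵥ ψ α‖ : 𝕜) ^ 2 * NormedSpace.exp (c * E α) / (E α - μ) := by
  have exp_eigen (α : ι) : NormedSpace.exp (c • (A + vecMulVec w (star w))) *ᵥ ψ α =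
      NormedSpace.exp (c * E α) • ψ α :=
    exp_mulVec_of_mulVec_eq_smul (by rw [smul_mulVec, hE, smul_smul])
  have coefficient (α : ι) :
      star (ψ α) ⬝ᵥ v = star (star w ⬝ᵥ ψ α) * (star w ⬝ᵥ v) / (E α - μ) := by
    rw [eq_div_iff (sub_ne_zero.mpr (hne α)), mul_comm, ← star_dotProduct]
    exact sub_mul_dotProduct_of_add_vecMulVec (star_vecMul_eq_smul_of_orthonormal hψ hE α) hv
  rw [dotProduct_mulVec_eq_sum_of_orthonormal hψ exp_eigen, Finset.mul_sum]
  refine Finset.sum_congr rfl fun α _ => ?_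
  rw [coefficient, ← RCLike.mul_conj, starRingEnd_apply]
  ring

end Exponential

/-- If `H_search = r•H + |w⟩⟨w|` admits an orthonormal eigenbasis `ψ` with real
eigenvalues `E` such that `E α ≠ r·λ i` for all `α, i`, and `γ α = ⟨w, ψ α⟩`, then for every
`t ∈ ℝ`, `⟨w, exp(−i t H_search) v_n⟩ = conj(a_n)·∑ α, |γ α|² e^{−i t E α}/(E α − r·λ_n)`. -/
theorem amplitude_formula
    (n : ℕ) (H : Matrix (Fin (n + 1)) (Fin (n + 1)) ℂ) (hH : H.IsHermitian)
    (v : Fin (n + 1) → (Fin (n + 1) → ℂ)) (lam : Fin (n + 1) → ℝ)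
    (hlam : Monotone lam)
    (hortho : ∀ i j, star (v i) ⬝ᵥ v j = if i = j then 1 else 0)
    (heig : ∀ i, H.mulVec (v i) = (lam i : ℂ) • v i)
    (w : Fin (n + 1) → ℂ) (hw : star w ⬝ᵥ w = 1)
    (a : Fin (n + 1) → ℂ) (ha : ∀ i, a i = star (v i) ⬝ᵥ w)
    (r : ℝ)
    (Hs : Matrix (Fin (n + 1)) (Fin (n + 1)) ℂ)
    (hHs : Hs = (r : ℂ) • H + Matrix.vecMulVec w (star w))
    (ψ : Fin (n + 1) → (Fin (n + 1) → ℂ)) (E : Fin (n + 1) → ℝ)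
    (horthoψ : ∀ α β, star (ψ α) ⬝ᵥ ψ β = if α = β then 1 else 0)
    (heigψ : ∀ α, Hs.mulVec (ψ α) = (E α : ℂ) • ψ α)
    (hEne : ∀ α i, E α ≠ r * lam i)
    (γ : Fin (n + 1) → ℂ) (hγ : ∀ α, γ α = star w ⬝ᵥ ψ α) :
    ∀ t : ℝ,
      star w ⬝ᵥ (NormedSpace.exp ((-(Complex.I * (t : ℂ))) • Hs)).mulVec (v (Fin.last n)) =
        (starRingEnd ℂ) (a (Fin.last n)) *
          ∑ α, (‖γ α‖ : ℂ) ^ 2 * Complex.exp (-(Complex.I * (t : ℂ) * (E α : ℂ))) /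
            ((E α : ℂ) - (r : ℂ) * (lam (Fin.last n) : ℂ)) := by
  intro t
  subst hHs
  simpa only [ha, hγ, starRingEnd_apply, ← star_dotProduct, Complex.exp_eq_exp_ℂ, neg_mul,
      RCLike.ofReal_eq_complex_ofReal] using
    amplitude_formula_general (by rw [smul_mulVec, heig, smul_smul]) horthoψ heigψ
      (fun α => mod_cast hEne α (Fin.last n)) (-(Complex.I * t))
end

section
/- Assume ε = |a_n|² > 0. Let 0 < r < S_1 and let δ satisfy 0 < δ < r·Δ and −ε/δ + Σ_{i=1}^{n−1} |a_i|²/(r(1−λ_i) − δ) = 1, where Δ = 1 − λ_{n−1}. Then δ < ε·r/(S_1 − r). -/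
open Matrix BigOperators

/-!
Put `S = ∑ cᵢ / gᵢ`, with `cᵢ = |aᵢ|²` and `gᵢ = 1 - λᵢ`. Shrinking every denominator `r gᵢ` to
`r gᵢ - δ > 0` increases `∑ cᵢ / (r gᵢ) = S / r`, and the secular equation says that the larger sum
is `1 + ε / δ`. Thus `S / r < 1 + ε / δ`, which is then solved for `δ`.
-/

section SecularEquation

variable {ι K : Type*} [Field K] [LinearOrder K]

theorem exists_pos_of_sum_div_pos {s : Finset ι} {c g : ι → K}
    (hc : ∀ i ∈ s, 0 ≤ c i) (hsum : 0 < ∑ i ∈ s, c i / g i) : ∃ i ∈ s, 0 < c i := by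
  obtain ⟨j, hj, hne⟩ := Finset.exists_ne_zero_of_sum_ne_zero hsum.ne'
  exact ⟨j, hj, (hc j hj).lt_of_ne' (div_ne_zero_iff.mp hne).1⟩

variable [IsStrictOrderedRing K]

theorem sum_div_lt_sum_div_of_denom_lt {s : Finset ι} {c d e : ι → K}
    (hc : ∀ i ∈ s, 0 ≤ c i) (hc_pos : ∃ i ∈ s, 0 < c i)
    (he : ∀ i ∈ s, 0 < e i) (hed : ∀ i ∈ s, e i < d i) :
    ∑ i ∈ s, c i / d i < ∑ i ∈ s, c i / e i := by
  obtain ⟨j, hj, hcj⟩ := hc_pos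
  exact Finset.sum_lt_sum
    (fun i hi ↦ div_le_div_of_nonneg_left (hc i hi) (he i hi) (hed i hi).le)
    ⟨j, hj, div_lt_div_of_pos_left hcj (he j hj) (hed j hj)⟩

theorem sum_div_div_lt_sum_div_mul_sub {s : Finset ι} {c g : ι → K} {r δ : K}
    (hc : ∀ i ∈ s, 0 ≤ c i) (hsum : 0 < ∑ i ∈ s, c i / g i)
    (hδ0 : 0 < δ) (hδ : ∀ i ∈ s, δ < r * g i) :
    (∑ i ∈ s, c i / g i) / r < ∑ i ∈ s, c i / (r * g i - δ) :=
  calc (∑ i ∈ s, c i / g i) / r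
    _ = ∑ i ∈ s, c i / (r * g i) := by simp only [Finset.sum_div, div_div, mul_comm r]
    _ < ∑ i ∈ s, c i / (r * g i - δ) :=
      sum_div_lt_sum_div_of_denom_lt hc (exists_pos_of_sum_div_pos hc hsum)
        (fun i hi ↦ sub_pos.mpr (hδ i hi)) (fun _ _ ↦ sub_lt_self _ hδ0)

theorem lt_mul_div_sub_of_div_lt_one_add_div {S r δ ε : K} (hr0 : 0 < r) (hr : r < S)
    (hδ0 : 0 < δ) (h : S / r < 1 + ε / δ) : δ < ε * r / (S - r) := by
  have hcleared : S * δ < (δ + ε) * r := by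
    rwa [one_add_div hδ0.ne', div_lt_div_iff₀ hr0 hδ0] at h
  rw [lt_div_iff₀ (sub_pos.mpr hr)]
  linarith

theorem delta_minus_upper_bound_general {s : Finset ι} {c g : ι → K} {r δ ε : K}
    (hc : ∀ i ∈ s, 0 ≤ c i) (hr0 : 0 < r) (hr : r < ∑ i ∈ s, c i / g i)
    (hδ0 : 0 < δ) (hδ : ∀ i ∈ s, δ < r * g i)
    (heq : -ε / δ + ∑ i ∈ s, c i / (r * g i - δ) = 1) :
    δ < ε * r / (∑ i ∈ s, c i / g i - r) := by
  have hsecular : ∑ i ∈ s, c i / (r * g i - δ) = 1 + ε / δ := by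
    linear_combination heq
  have hlt := sum_div_div_lt_sum_div_mul_sub hc (hr0.trans hr) hδ0 hδ
  exact lt_mul_div_sub_of_div_lt_one_add_div hr0 hr hδ0 (hsecular ▸ hlt)

end SecularEquation

/-- Assume `ε = |a_n|² > 0`. If `0 < r < S₁` and `δ` satisfies `0 < δ < r·Δ`
and `−ε/δ + ∑_{i<n} |a i|²/(r(1−λ i) − δ) = 1`, where `Δ = 1 − λ_{n−1}`, then
`δ < ε·r/(S₁ − r)`. -/
theorem delta_minus_upper_bound
    (n : ℕ) (H : Matrix (Fin (n + 2)) (Fin (n + 2)) ℂ) (hH : H.IsHermitian)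
    (v : Fin (n + 2) → (Fin (n + 2) → ℂ)) (lam : Fin (n + 2) → ℝ)
    (hlam : Monotone lam) (hlam0 : ∀ i, 0 ≤ lam i)
    (hlast : lam (Fin.last (n + 1)) = 1)
    (hlt : ∀ i, i ≠ Fin.last (n + 1) → lam i < 1)
    (hortho : ∀ i j, star (v i) ⬝ᵥ v j = if i = j then 1 else 0)
    (heig : ∀ i, H.mulVec (v i) = (lam i : ℂ) • v i)
    (w : Fin (n + 2) → ℂ) (hw : star w ⬝ᵥ w = 1)
    (a : Fin (n + 2) → ℂ) (ha : ∀ i, a i = star (v i) ⬝ᵥ w)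
    (ε : ℝ) (hε : ε = ‖a (Fin.last (n + 1))‖ ^ 2) (hε0 : 0 < ε)
    (S1 Δ : ℝ)
    (hS1 : S1 = ∑ i : Fin (n + 1), ‖a i.castSucc‖ ^ 2 / (1 - lam i.castSucc))
    (hΔ : Δ = 1 - lam ((Fin.last n).castSucc))
    (r : ℝ) (hr0 : 0 < r) (hr : r < S1)
    (δ : ℝ) (hδ0 : 0 < δ) (hδΔ : δ < r * Δ)
    (heq : -ε / δ + ∑ i : Fin (n + 1),
        ‖a i.castSucc‖ ^ 2 / (r * (1 - lam i.castSucc) - δ) = 1) :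
    δ < ε * r / (S1 - r) := by
  subst hS1 hΔ
  have hδ (i : Fin (n + 1)) : δ < r * (1 - lam i.castSucc) :=
    hδΔ.trans_le (by gcongr; exact hlam (Fin.castSucc_le_castSucc_iff.mpr i.le_last))
  exact delta_minus_upper_bound_general (fun _ _ ↦ sq_nonneg _) hr0 hr hδ0 (fun i _ ↦ hδ i) heq
end

section
/- Assume ε = |a_n|² < 1 (so S_1 > 0). Then for every real δ with 0 < |δ| < S_1·Δ, the Taylor-remainder bound |Σ_{i=1}^{n−1} |a_i|²/(S_1(1−λ_i) + δ) − 1 + S_2·δ/S_1²| ≤ S_3·δ²/(S_1³·(1 − |δ|/(S_1·Δ))) holds. -/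
open Matrix BigOperators

/-! Truncating the geometric series of `(y + δ)⁻¹ = y⁻¹ (1 + δ / y)⁻¹` after `k` terms leaves
exactly the error `(-δ) ^ k / (y ^ k * (y + δ))`, and `‖y + δ‖ ≥ ‖y‖ (1 - ‖δ‖ / m)` whenever
`‖δ‖ < m ≤ ‖y‖`. Summing over `y i = S x i` with weights `c i`, `m = ‖S‖ D` and `k = 2` gives the
bound; the normalization `S = ∑ c i / x i` makes the constant term equal to `1`. -/

theorem inv_add_sub_sum_range {K : Type*} [Field K] {y δ : K} (hy : y ≠ 0) (hyδ : y + δ ≠ 0)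
    (k : ℕ) :
    (y + δ)⁻¹ - ∑ j ∈ Finset.range k, (-δ) ^ j / y ^ (j + 1) = (-δ) ^ k / (y ^ k * (y + δ)) := by
  induction k with
  | zero => simp
  | succ k ih =>
    rw [Finset.sum_range_succ, ← sub_sub, ih]
    field_simp
    ring

theorem sum_div_mul_pow {ι K : Type*} [Semifield K] (s : Finset ι) (c x : ι → K) (r : K) (k : ℕ) :
    ∑ i ∈ s, c i / (r * x i) ^ k = (∑ i ∈ s, c i / x i ^ k) / r ^ k := by
  simp only [Finset.sum_div, mul_pow, div_div, mul_comm]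

theorem norm_mul_one_sub_div_le_norm_add {E : Type*} [SeminormedAddCommGroup E] {y δ : E} {m : ℝ}
    (hm : 0 < m) (hy : m ≤ ‖y‖) : ‖y‖ * (1 - ‖δ‖ / m) ≤ ‖y + δ‖ := by
  have norm_le : ‖δ‖ ≤ ‖y‖ * (‖δ‖ / m) := calc
    ‖δ‖ = m * (‖δ‖ / m) := (mul_div_cancel₀ ‖δ‖ hm.ne').symm
    _ ≤ ‖y‖ * (‖δ‖ / m) := by gcongr
  calc
    ‖y‖ * (1 - ‖δ‖ / m) ≤ ‖y‖ - ‖δ‖ := by linarith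
    _ ≤ ‖y + δ‖ := norm_sub_le_norm_add y δ

section NormedField

variable {𝕜 : Type*} [NormedField 𝕜]

theorem norm_inv_add_sub_sum_range_le {y δ : 𝕜} {m : ℝ} (hδ : ‖δ‖ < m) (hy : m ≤ ‖y‖) (k : ℕ) :
    ‖(y + δ)⁻¹ - ∑ j ∈ Finset.range k, (-δ) ^ j / y ^ (j + 1)‖ ≤
      ‖δ‖ ^ k / (‖y‖ ^ (k + 1) * (1 - ‖δ‖ / m)) := by
  have m_pos : 0 < m := (norm_nonneg δ).trans_lt hδ
  have y_pos : 0 < ‖y‖ := m_pos.trans_le hy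
  have gap_pos : 0 < 1 - ‖δ‖ / m := sub_pos.2 ((div_lt_one m_pos).2 hδ)
  have le_norm_add : ‖y‖ * (1 - ‖δ‖ / m) ≤ ‖y + δ‖ := norm_mul_one_sub_div_le_norm_add m_pos hy
  have add_ne : y + δ ≠ 0 := norm_pos_iff.1 ((mul_pos y_pos gap_pos).trans_le le_norm_add)
  calc
    _ = ‖δ‖ ^ k / (‖y‖ ^ k * ‖y + δ‖) := by
      rw [inv_add_sub_sum_range (norm_pos_iff.1 y_pos) add_ne, norm_div, norm_mul, norm_pow,
        norm_pow, norm_neg]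
    _ ≤ ‖δ‖ ^ k / (‖y‖ ^ k * (‖y‖ * (1 - ‖δ‖ / m))) := by gcongr
    _ = ‖δ‖ ^ k / (‖y‖ ^ (k + 1) * (1 - ‖δ‖ / m)) := by rw [pow_succ, mul_assoc]

variable {ι : Type*} (s : Finset ι) (c : ι → 𝕜)

theorem norm_sum_div_add_sub_sum_range_le {y : ι → 𝕜} {δ : 𝕜} {m : ℝ} (hδ : ‖δ‖ < m)
    (hy : ∀ i ∈ s, m ≤ ‖y i‖) (k : ℕ) :
    ‖∑ i ∈ s, c i / (y i + δ) -
        ∑ j ∈ Finset.range k, (∑ i ∈ s, c i / y i ^ (j + 1)) * (-δ) ^ j‖ ≤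
      (∑ i ∈ s, ‖c i‖ / ‖y i‖ ^ (k + 1)) * ‖δ‖ ^ k / (1 - ‖δ‖ / m) := by
  have termwise : ∑ i ∈ s, c i / (y i + δ) -
        ∑ j ∈ Finset.range k, (∑ i ∈ s, c i / y i ^ (j + 1)) * (-δ) ^ j =
      ∑ i ∈ s, c i * ((y i + δ)⁻¹ - ∑ j ∈ Finset.range k, (-δ) ^ j / y i ^ (j + 1)) := by
    simp only [Finset.sum_mul, mul_sub, Finset.sum_sub_distrib, Finset.mul_sum, div_eq_mul_inv]
    rw [Finset.sum_comm]
    simp only [mul_right_comm, mul_assoc]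
  rw [termwise, Finset.sum_mul, Finset.sum_div]
  refine norm_sum_le_of_le s fun i hi => ?_
  calc
    _ ≤ ‖c i‖ * (‖δ‖ ^ k / (‖y i‖ ^ (k + 1) * (1 - ‖δ‖ / m))) := by
      rw [norm_mul]
      gcongr
      exact norm_inv_add_sub_sum_range_le hδ (hy i hi) k
    _ = ‖c i‖ / ‖y i‖ ^ (k + 1) * ‖δ‖ ^ k / (1 - ‖δ‖ / m) := by
      simp only [div_eq_mul_inv, mul_inv]
      ring

theorem taylor_remainder_bound_general {x : ι → 𝕜} {S δ : 𝕜} {D : ℝ}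
    (hS : S = ∑ i ∈ s, c i / x i) (hx : ∀ i ∈ s, D ≤ ‖x i‖) (hδ : ‖δ‖ < ‖S‖ * D) :
    ‖∑ i ∈ s, c i / (S * x i + δ) - 1 + (∑ i ∈ s, c i / x i ^ 2) * δ / S ^ 2‖ ≤
      (∑ i ∈ s, ‖c i‖ / ‖x i‖ ^ 3) * ‖δ‖ ^ 2 / (‖S‖ ^ 3 * (1 - ‖δ‖ / (‖S‖ * D))) := by
  have S_ne : S ≠ 0 := by
    rintro rfl
    simp [(norm_nonneg δ).not_gt] at hδ
  have scaled_le : ∀ i ∈ s, ‖S‖ * D ≤ ‖S * x i‖ := fun i hi => by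
    rw [norm_mul]
    gcongr
    exact hx i hi
  have expansion : ∑ i ∈ s, c i / (S * x i + δ) - 1 + (∑ i ∈ s, c i / x i ^ 2) * δ / S ^ 2 =
      ∑ i ∈ s, c i / (S * x i + δ) -
        ∑ j ∈ Finset.range 2, (∑ i ∈ s, c i / (S * x i) ^ (j + 1)) * (-δ) ^ j := by
    simp only [sum_div_mul_pow, Finset.sum_range_succ, Finset.sum_range_zero, zero_add, pow_one,
      ← hS, div_self S_ne]
    ring
  calc
    _ ≤ (∑ i ∈ s, ‖c i‖ / ‖S * x i‖ ^ 3) * ‖δ‖ ^ 2 / (1 - ‖δ‖ / (‖S‖ * D)) :=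
      expansion ▸ norm_sum_div_add_sub_sum_range_le s c hδ scaled_le 2
    _ = _ := by
      simp only [norm_mul, sum_div_mul_pow]
      rw [div_mul_eq_mul_div, div_div]

end NormedField

/-- Assume `ε = |a_n|² < 1` (so `S₁ > 0`). Then for every real `δ` with
`0 < |δ| < S₁·Δ`, the Taylor-remainder bound
`|∑_{i<n} |a i|²/(S₁(1−λ i) + δ) − 1 + S₂·δ/S₁²| ≤ S₃·δ²/(S₁³·(1 − |δ|/(S₁·Δ)))` holds. -/
theorem taylor_remainder_bound
    (n : ℕ) (H : Matrix (Fin (n + 2)) (Fin (n + 2)) ℂ) (hH : H.IsHermitian)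
    (v : Fin (n + 2) → (Fin (n + 2) → ℂ)) (lam : Fin (n + 2) → ℝ)
    (hlam : Monotone lam) (hlam0 : ∀ i, 0 ≤ lam i)
    (hlast : lam (Fin.last (n + 1)) = 1)
    (hlt : ∀ i, i ≠ Fin.last (n + 1) → lam i < 1)
    (hortho : ∀ i j, star (v i) ⬝ᵥ v j = if i = j then 1 else 0)
    (heig : ∀ i, H.mulVec (v i) = (lam i : ℂ) • v i)
    (w : Fin (n + 2) → ℂ) (hw : star w ⬝ᵥ w = 1)
    (a : Fin (n + 2) → ℂ) (ha : ∀ i, a i = star (v i) ⬝ᵥ w)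
    (ε : ℝ) (hε : ε = ‖a (Fin.last (n + 1))‖ ^ 2) (hε1 : ε < 1)
    (Δ S1 S2 S3 : ℝ)
    (hΔ : Δ = 1 - lam ((Fin.last n).castSucc))
    (hS1 : S1 = ∑ i : Fin (n + 1), ‖a i.castSucc‖ ^ 2 / (1 - lam i.castSucc))
    (hS2 : S2 = ∑ i : Fin (n + 1), ‖a i.castSucc‖ ^ 2 / (1 - lam i.castSucc) ^ 2)
    (hS3 : S3 = ∑ i : Fin (n + 1), ‖a i.castSucc‖ ^ 2 / (1 - lam i.castSucc) ^ 3) :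
    ∀ δ : ℝ, 0 < |δ| → |δ| < S1 * Δ →
      |(∑ i : Fin (n + 1), ‖a i.castSucc‖ ^ 2 / (S1 * (1 - lam i.castSucc) + δ)) - 1 +
          S2 * δ / S1 ^ 2| ≤
        S3 * δ ^ 2 / (S1 ^ 3 * (1 - |δ| / (S1 * Δ))) := by
  intro δ _ hδ
  have gap_pos (i : Fin (n + 1)) : 0 < 1 - lam i.castSucc :=
    sub_pos.2 (hlt _ (Fin.castSucc_ne_last i))
  have gap_le (i : Fin (n + 1)) : Δ ≤ 1 - lam i.castSucc :=
    hΔ.trans_le (sub_le_sub_left (hlam (Fin.castSucc_le_castSucc_iff.2 (Fin.le_last i))) 1)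
  have S1_nonneg : 0 ≤ S1 :=
    hS1 ▸ Finset.sum_nonneg fun i _ => div_nonneg (sq_nonneg _) (gap_pos i).le
  have bound := taylor_remainder_bound_general (δ := δ) (D := Δ) _ _ hS1
    (fun i _ => (gap_le i).trans (le_abs_self _)) (by rwa [Real.norm_of_nonneg S1_nonneg])
  simpa only [Real.norm_eq_abs, abs_of_nonneg S1_nonneg, abs_of_pos (gap_pos _), abs_pow, abs_norm,
    sq_abs, ← hS2, ← hS3] using bound
end

section
/- There exists a constant c > 0 such that the following holds. For every n ≥ 2, every reals 0 ≤ λ_1 ≤ … ≤ λ_{n−1} < λ_n = 1 and complex numbers a_1,…,a_n with Σ_{i=1}^n |a_i|² = 1 and ε := |a_n|² > 0, define Δ = 1 − λ_{n−1}, S_k = Σ_{i=1}^{n−1} |a_i|²/(1−λ_i)^k, δ₀ = √ε·S_1/√S_2 and η = √ε·S_3/S_2^{3/2}. If the spectral condition √ε ≤ c·min{S_1·S_2/S_3, Δ·√S_2} holds, then the equation ε/δ + Σ_{i=1}^{n−1} |a_i|²/(S_1(1−λ_i) + δ) = 1 has a solution δ₊ in the interval [(1−η)δ₀, (1+η)δ₀]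 and a solution δ₋ in the interval [−(1+η)δ₀, −(1−η)δ₀] (so that, with r = S_1, both S_1 + δ₊ and S_1 + δ₋ are eigenvalues of H_search). -/
open BigOperators

/-!
Write `p i = |a i|²`, `x i = 1 - λ i` and `δ = S₁ s`. Expanding `1 / (x + s)` at `s = 0`, the
constant term `S₁` cancels the right-hand side, and the secular equation becomes `s² R₁(s) = ε` with
`R₁(s) = ∑ p / (x (x + s)) = S₂ - s R₂(s)`. To leading order `s = ± q` with `q = √ε / √S₂`, which
is `δ = ± δ₀`. The correction `s R₂(s)` is of size `q S₃ = η S₂`, so `s² R₁(s) - ε` changes sign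
between `q` and `(1 + η) q`, and between `-q` and `-(1 - η) q`, once `η` is small. Since
`Δ S₃ ≤ S₂`, the bound `q ≤ c Δ` gives `η ≤ c`.
-/

section Resolvent

variable {ι : Type*} [Fintype ι]

/-- The moment `S_k = ∑ p / x ^ k` of the weights `p` at the spectral gaps `x`. -/
noncomputable def inverseMoment (p x : ι → ℝ) (k : ℕ) : ℝ := ∑ i, p i / x i ^ k

/-- The function `R_k(s) = ∑ p / (x ^ k (x + s))`: for `k = 0` the resolvent sum of the secular
equation, and up to the sign `(-1) ^ k` the `k`-th divided difference of `R_0` at `0, …, 0, s`, so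
that `(-s) ^ k R_k(s)` is the remainder of the Taylor expansion of `R_0` at `0`. -/
noncomputable def weightedResolvent (p x : ι → ℝ) (k : ℕ) (s : ℝ) : ℝ :=
  ∑ i, p i / (x i ^ k * (x i + s))

variable {p x : ι → ℝ}

lemma inverseMoment_nonneg (hp : ∀ i, 0 ≤ p i) (hx : ∀ i, 0 ≤ x i) (k : ℕ) :
    0 ≤ inverseMoment p x k :=
  Finset.sum_nonneg fun i _ => div_nonneg (hp i) (pow_nonneg (hx i) k)

lemma mul_inverseMoment_succ_le {Δ : ℝ} (hp : ∀ i, 0 ≤ p i) (hx : ∀ i, 0 < x i)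
    (hΔx : ∀ i, Δ ≤ x i) (k : ℕ) :
    Δ * inverseMoment p x (k + 1) ≤ inverseMoment p x k := by
  rw [inverseMoment, Finset.mul_sum]
  refine Finset.sum_le_sum fun i _ => ?_
  have hterm : 0 ≤ p i / x i ^ (k + 1) := div_nonneg (hp i) (pow_nonneg (hx i).le _)
  calc Δ * (p i / x i ^ (k + 1)) ≤ x i * (p i / x i ^ (k + 1)) :=
        mul_le_mul_of_nonneg_right (hΔx i) hterm
    _ = p i / x i ^ k := by
        have := (hx i).ne'
        field_simp
        ring

lemma weightedResolvent_eq_sub {s : ℝ} (hx : ∀ i, x i ≠ 0) (hxs : ∀ i, x i + s ≠ 0) (k : ℕ) :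
    weightedResolvent p x k s =
      inverseMoment p x (k + 1) - s * weightedResolvent p x (k + 1) s := by
  simp only [weightedResolvent, inverseMoment]
  rw [Finset.mul_sum, ← Finset.sum_sub_distrib]
  refine Finset.sum_congr rfl fun i _ => ?_
  have := hx i
  have := hxs i
  field_simp
  ring

lemma weightedResolvent_nonneg {s : ℝ} (hp : ∀ i, 0 ≤ p i) (hx : ∀ i, 0 ≤ x i)
    (hxs : ∀ i, 0 ≤ x i + s) (k : ℕ) : 0 ≤ weightedResolvent p x k s :=
  Finset.sum_nonneg fun i _ => div_nonneg (hp i) (mul_nonneg (pow_nonneg (hx i) k) (hxs i))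

lemma mul_weightedResolvent_le {κ s : ℝ} (hp : ∀ i, 0 ≤ p i) (hx : ∀ i, 0 < x i)
    (hxs : ∀ i, 0 < x i + s) (hκ : ∀ i, κ * x i ≤ x i + s) (k : ℕ) :
    κ * weightedResolvent p x k s ≤ inverseMoment p x (k + 1) := by
  rw [weightedResolvent, Finset.mul_sum]
  refine Finset.sum_le_sum fun i _ => ?_
  have hxi := hx i
  have hxsi := hxs i
  calc κ * (p i / (x i ^ k * (x i + s)))
      = κ * x i * (p i / (x i ^ (k + 1) * (x i + s))) := by
        field_simp
        ring
    _ ≤ (x i + s) * (p i / (x i ^ (k + 1) * (x i + s))) :=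
        mul_le_mul_of_nonneg_right (hκ i) (div_nonneg (hp i) (by positivity))
    _ = p i / x i ^ (k + 1) := by field_simp

lemma weightedResolvent_le_inverseMoment {s : ℝ} (hp : ∀ i, 0 ≤ p i) (hx : ∀ i, 0 < x i)
    (hs : 0 ≤ s) (k : ℕ) : weightedResolvent p x k s ≤ inverseMoment p x (k + 1) := by
  simpa only [one_mul] using mul_weightedResolvent_le (κ := 1) hp hx
    (fun i => add_pos_of_pos_of_nonneg (hx i) hs) (fun i => by linarith) k

lemma inverseMoment_le_weightedResolvent {s : ℝ} (hp : ∀ i, 0 ≤ p i) (hx : ∀ i, 0 < x i)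
    (hxs : ∀ i, 0 < x i + s) (hs : s ≤ 0) (k : ℕ) :
    inverseMoment p x (k + 1) ≤ weightedResolvent p x k s := by
  have hR : 0 ≤ weightedResolvent p x (k + 1) s :=
    weightedResolvent_nonneg hp (fun i => (hx i).le) (fun i => (hxs i).le) (k + 1)
  rw [weightedResolvent_eq_sub (fun i => (hx i).ne') (fun i => (hxs i).ne') k]
  linarith [mul_nonpos_of_nonpos_of_nonneg hs hR]

lemma continuousOn_weightedResolvent {t : Set ℝ} (hx : ∀ i, x i ≠ 0)
    (hxt : ∀ s ∈ t, ∀ i, x i + s ≠ 0) (k : ℕ) : ContinuousOn (weightedResolvent p x k) t :=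
  continuousOn_finsetSum _ fun i _ => continuousOn_const.div (by fun_prop) fun s hs =>
    mul_ne_zero (pow_ne_zero k (hx i)) (hxt s hs i)

lemma secular_eq_one_iff {ε s : ℝ} (hx : ∀ i, x i ≠ 0) (hxs : ∀ i, x i + s ≠ 0)
    (hS₁ : inverseMoment p x 1 ≠ 0) (hs : s ≠ 0) :
    ε / (inverseMoment p x 1 * s) +
        ∑ i, p i / (inverseMoment p x 1 * x i + inverseMoment p x 1 * s) = 1 ↔
      s ^ 2 * weightedResolvent p x 1 s = ε := by
  have hsum : ∑ i, p i / (inverseMoment p x 1 * x i + inverseMoment p x 1 * s) =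
      weightedResolvent p x 0 s / inverseMoment p x 1 := by
    simp only [weightedResolvent, pow_zero, one_mul, Finset.sum_div, div_div, add_mul,
      mul_comm (inverseMoment p x 1)]
  rw [hsum, weightedResolvent_eq_sub hx hxs 0]
  field_simp
  constructor <;> intro h <;> linarith

lemma le_sq_mul_weightedResolvent_one_add_mul {q η : ℝ} (hp : ∀ i, 0 ≤ p i) (hx : ∀ i, 0 < x i)
    (hq : 0 ≤ q) (hη₀ : 0 ≤ η) (hη : η ≤ 1 / 4)
    (hqη : q * inverseMoment p x 3 ≤ η * inverseMoment p x 2) :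
    q ^ 2 * inverseMoment p x 2 ≤
      ((1 + η) * q) ^ 2 * weightedResolvent p x 1 ((1 + η) * q) := by
  have hs : 0 ≤ (1 + η) * q := mul_nonneg (by linarith) hq
  have hxs : ∀ i, 0 < x i + (1 + η) * q := fun i => add_pos_of_pos_of_nonneg (hx i) hs
  have hS₂ : 0 ≤ inverseMoment p x 2 := inverseMoment_nonneg hp (fun i => (hx i).le) 2
  have hR₂ : weightedResolvent p x 2 ((1 + η) * q) ≤ inverseMoment p x 3 :=
    weightedResolvent_le_inverseMoment hp hx hs 2
  have hR₁ : (1 - (1 + η) * η) * inverseMoment p x 2 ≤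
      weightedResolvent p x 1 ((1 + η) * q) := by
    rw [weightedResolvent_eq_sub (fun i => (hx i).ne') (fun i => (hxs i).ne') 1]
    nlinarith [mul_le_mul_of_nonneg_left hR₂ hs]
  have hfactor : 1 ≤ (1 + η) ^ 2 * (1 - (1 + η) * η) := by
    have hη₂ : η * η ≤ 1 / 4 * η := mul_le_mul_of_nonneg_right hη hη₀
    nlinarith [mul_le_mul_of_nonneg_right hη₂ hη₀, mul_le_mul_of_nonneg_right hη₂ (sq_nonneg η)]
  calc q ^ 2 * inverseMoment p x 2
      ≤ q ^ 2 * ((1 + η) ^ 2 * (1 - (1 + η) * η) * inverseMoment p x 2) :=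
        mul_le_mul_of_nonneg_left (le_mul_of_one_le_left hS₂ hfactor) (sq_nonneg q)
    _ = ((1 + η) * q) ^ 2 * ((1 - (1 + η) * η) * inverseMoment p x 2) := by ring
    _ ≤ ((1 + η) * q) ^ 2 * weightedResolvent p x 1 ((1 + η) * q) :=
        mul_le_mul_of_nonneg_left hR₁ (sq_nonneg _)

lemma sq_mul_weightedResolvent_neg_one_sub_mul_le {q η : ℝ} (hp : ∀ i, 0 ≤ p i)
    (hx : ∀ i, 0 < x i) (hq : 0 ≤ q) (hqx : ∀ i, q ≤ 1 / 4 * x i) (hη₀ : 0 ≤ η) (hη : η ≤ 1)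
    (hqη : q * inverseMoment p x 3 ≤ η * inverseMoment p x 2) :
    (-(1 - η) * q) ^ 2 * weightedResolvent p x 1 (-(1 - η) * q) ≤
      q ^ 2 * inverseMoment p x 2 := by
  have hκ : ∀ i, 3 / 4 * x i ≤ x i + -(1 - η) * q := fun i => by
    linarith [hqx i, mul_nonneg hη₀ hq]
  have hxs : ∀ i, 0 < x i + -(1 - η) * q := fun i => by linarith [hκ i, hx i]
  have hS₂ : 0 ≤ inverseMoment p x 2 := inverseMoment_nonneg hp (fun i => (hx i).le) 2
  have hR₂ : 3 / 4 * weightedResolvent p x 2 (-(1 - η) * q) ≤ inverseMoment p x 3 :=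
    mul_weightedResolvent_le hp hx hxs hκ 2
  have hR₁ : weightedResolvent p x 1 (-(1 - η) * q) ≤
      (1 + 4 / 3 * (1 - η) * η) * inverseMoment p x 2 := by
    rw [weightedResolvent_eq_sub (fun i => (hx i).ne') (fun i => (hxs i).ne') 1]
    nlinarith [mul_le_mul_of_nonneg_left hR₂ (mul_nonneg (sub_nonneg.2 hη) hq)]
  have hfactor : (1 - η) ^ 2 * (1 + 4 / 3 * (1 - η) * η) ≤ 1 := by
    have hη₂ : 1 + 4 / 3 * (1 - η) * η ≤ (1 + η) ^ 2 := by nlinarith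
    calc (1 - η) ^ 2 * (1 + 4 / 3 * (1 - η) * η) ≤ (1 - η) ^ 2 * (1 + η) ^ 2 :=
          mul_le_mul_of_nonneg_left hη₂ (sq_nonneg _)
      _ = (1 - η ^ 2) ^ 2 := by ring
      _ ≤ 1 := pow_le_one₀ (by nlinarith) (by nlinarith)
  calc (-(1 - η) * q) ^ 2 * weightedResolvent p x 1 (-(1 - η) * q)
      ≤ (-(1 - η) * q) ^ 2 * ((1 + 4 / 3 * (1 - η) * η) * inverseMoment p x 2) :=
        mul_le_mul_of_nonneg_left hR₁ (sq_nonneg _)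
    _ = q ^ 2 * ((1 - η) ^ 2 * (1 + 4 / 3 * (1 - η) * η) * inverseMoment p x 2) := by ring
    _ ≤ q ^ 2 * inverseMoment p x 2 :=
        mul_le_mul_of_nonneg_left (mul_le_of_le_one_left hS₂ hfactor) (sq_nonneg q)

lemma exists_pos_sq_mul_weightedResolvent_eq {q η : ℝ} (hp : ∀ i, 0 ≤ p i) (hx : ∀ i, 0 < x i)
    (hq : 0 ≤ q) (hη₀ : 0 ≤ η) (hη : η ≤ 1 / 4)
    (hqη : q * inverseMoment p x 3 ≤ η * inverseMoment p x 2) :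
    ∃ s ∈ Set.Icc q ((1 + η) * q), s ^ 2 * weightedResolvent p x 1 s =
      q ^ 2 * inverseMoment p x 2 := by
  have hxs : ∀ s, q ≤ s → ∀ i, 0 < x i + s := fun s hs i => by linarith [hx i]
  have hcont : ContinuousOn (fun s => s ^ 2 * weightedResolvent p x 1 s)
      (Set.Icc q ((1 + η) * q)) :=
    (continuousOn_id.pow 2).mul <| continuousOn_weightedResolvent (fun i => (hx i).ne')
      (fun s hs i => (hxs s hs.1 i).ne') 1
  exact intermediate_value_Icc (by nlinarith) hcont
    ⟨mul_le_mul_of_nonneg_left (weightedResolvent_le_inverseMoment hp hx hq 1) (sq_nonneg q),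
      le_sq_mul_weightedResolvent_one_add_mul hp hx hq hη₀ hη hqη⟩

lemma exists_neg_sq_mul_weightedResolvent_eq {q η : ℝ} (hp : ∀ i, 0 ≤ p i) (hx : ∀ i, 0 < x i)
    (hq : 0 ≤ q) (hqx : ∀ i, q ≤ 1 / 4 * x i) (hη₀ : 0 ≤ η) (hη : η ≤ 1)
    (hqη : q * inverseMoment p x 3 ≤ η * inverseMoment p x 2) :
    ∃ s ∈ Set.Icc (-q) (-(1 - η) * q), s ^ 2 * weightedResolvent p x 1 s =
      q ^ 2 * inverseMoment p x 2 := by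
  have hxs : ∀ s, -q ≤ s → ∀ i, 0 < x i + s := fun s hs i => by linarith [hqx i, hx i]
  have hcont : ContinuousOn (fun s => s ^ 2 * weightedResolvent p x 1 s)
      (Set.Icc (-q) (-(1 - η) * q)) :=
    (continuousOn_id.pow 2).mul <| continuousOn_weightedResolvent (fun i => (hx i).ne')
      (fun s hs i => (hxs s hs.1 i).ne') 1
  have hleft : q ^ 2 * inverseMoment p x 2 ≤ (-q) ^ 2 * weightedResolvent p x 1 (-q) := by
    rw [neg_sq]
    exact mul_le_mul_of_nonneg_left
      (inverseMoment_le_weightedResolvent hp hx (hxs _ le_rfl) (by linarith) 1) (sq_nonneg q)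
  exact intermediate_value_Icc' (by nlinarith) hcont
    ⟨sq_mul_weightedResolvent_neg_one_sub_mul_le hp hx hq hqx hη₀ hη hqη, hleft⟩

lemma exists_secular_eq_one_of_exists_mem_Icc {ε u v : ℝ} (hx : ∀ i, x i ≠ 0)
    (hS₁ : 0 < inverseMoment p x 1) (h₀ : ∀ s ∈ Set.Icc u v, s ≠ 0)
    (hxs : ∀ s ∈ Set.Icc u v, ∀ i, x i + s ≠ 0)
    (h : ∃ s ∈ Set.Icc u v, s ^ 2 * weightedResolvent p x 1 s = ε) :
    ∃ δ ∈ Set.Icc (inverseMoment p x 1 * u) (inverseMoment p x 1 * v),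
      ε / δ + ∑ i, p i / (inverseMoment p x 1 * x i + δ) = 1 := by
  obtain ⟨s, hs, hsε⟩ := h
  exact ⟨inverseMoment p x 1 * s,
    ⟨mul_le_mul_of_nonneg_left hs.1 hS₁.le, mul_le_mul_of_nonneg_left hs.2 hS₁.le⟩,
    (secular_eq_one_iff hx (hxs s hs) hS₁.ne' (h₀ s hs)).2 hsε⟩

lemma exists_secular_solutions_of_scale {q η : ℝ} (hp : ∀ i, 0 ≤ p i) (hx : ∀ i, 0 < x i)
    (hS₁ : 0 < inverseMoment p x 1) (hq : 0 < q) (hqx : ∀ i, q ≤ 1 / 4 * x i)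
    (hη₀ : 0 ≤ η) (hη : η ≤ 1 / 4)
    (hqη : q * inverseMoment p x 3 ≤ η * inverseMoment p x 2) :
    (∃ δ ∈ Set.Icc (inverseMoment p x 1 * q) (inverseMoment p x 1 * ((1 + η) * q)),
      q ^ 2 * inverseMoment p x 2 / δ + ∑ i, p i / (inverseMoment p x 1 * x i + δ) = 1) ∧
    ∃ δ ∈ Set.Icc (inverseMoment p x 1 * -q) (inverseMoment p x 1 * (-(1 - η) * q)),
      q ^ 2 * inverseMoment p x 2 / δ + ∑ i, p i / (inverseMoment p x 1 * x i + δ) = 1 := by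
  have hx₀ : ∀ i, x i ≠ 0 := fun i => (hx i).ne'
  have hxs : ∀ s, -q ≤ s → ∀ i, x i + s ≠ 0 := fun s hs i => by
    have : 0 < x i + s := by linarith [hqx i, hx i]
    exact this.ne'
  have hneg : -(1 - η) * q < 0 := mul_neg_of_neg_of_pos (by linarith) hq
  exact ⟨exists_secular_eq_one_of_exists_mem_Icc hx₀ hS₁
      (fun s hs => (hq.trans_le hs.1).ne') (fun s hs => hxs s (by linarith [hs.1]))
      (exists_pos_sq_mul_weightedResolvent_eq hp hx hq.le hη₀ hη hqη),
    exists_secular_eq_one_of_exists_mem_Icc hx₀ hS₁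
      (fun s hs => (hs.2.trans_lt hneg).ne) (fun s hs => hxs s hs.1)
      (exists_neg_sq_mul_weightedResolvent_eq hp hx hq.le hqx hη₀ (by linarith) hqη)⟩

theorem exists_secular_solutions_near_delta0_general {ε Δ S1 S2 S3 δ0 η : ℝ}
    (hp : ∀ i, 0 ≤ p i) (hΔ : 0 < Δ) (hΔx : ∀ i, Δ ≤ x i) (hε : 0 < ε)
    (hS1 : S1 = ∑ i, p i / x i) (hS2 : S2 = ∑ i, p i / x i ^ 2) (hS3 : S3 = ∑ i, p i / x i ^ 3)
    (hδ0 : δ0 = √ε * S1 / √S2) (hη : η = √ε * S3 / (S2 * √S2))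
    (hgap : √ε ≤ 1 / 4 * (Δ * √S2)) :
    (∃ δ ∈ Set.Icc δ0 ((1 + η) * δ0), ε / δ + ∑ i, p i / (S1 * x i + δ) = 1) ∧
      ∃ δ ∈ Set.Icc (-δ0) (-(1 - η) * δ0), ε / δ + ∑ i, p i / (S1 * x i + δ) = 1 := by
  have hx : ∀ i, 0 < x i := fun i => hΔ.trans_le (hΔx i)
  replace hS1 : S1 = inverseMoment p x 1 := by simpa only [inverseMoment, pow_one] using hS1
  change S2 = inverseMoment p x 2 at hS2
  change S3 = inverseMoment p x 3 at hS3
  have hsqrtε : 0 < √ε := Real.sqrt_pos.2 hε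
  have hsqrtS2 : 0 < √S2 := pos_of_mul_pos_right (a := Δ) (by linarith) hΔ.le
  have hS2_pos : 0 < S2 := Real.sqrt_pos.1 hsqrtS2
  have hS3_nonneg : 0 ≤ S3 := hS3 ▸ inverseMoment_nonneg hp (fun i => (hx i).le) 3
  have hΔS2 : Δ * S2 ≤ S1 := hS1 ▸ hS2 ▸ mul_inverseMoment_succ_le hp hx hΔx 1
  have hΔS3 : Δ * S3 ≤ S2 := hS2 ▸ hS3 ▸ mul_inverseMoment_succ_le hp hx hΔx 2
  have hS1_pos : 0 < S1 := (mul_pos hΔ hS2_pos).trans_le hΔS2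
  obtain ⟨q, hq⟩ : ∃ q, q = √ε / √S2 := ⟨_, rfl⟩
  have hq_pos : 0 < q := hq ▸ div_pos hsqrtε hsqrtS2
  have hqΔ : q ≤ 1 / 4 * Δ := by
    rw [hq, div_le_iff₀ hsqrtS2]
    linarith
  have hqε : q ^ 2 * S2 = ε := by
    rw [hq, div_pow, Real.sq_sqrt hε.le, Real.sq_sqrt hS2_pos.le, div_mul_cancel₀ _ hS2_pos.ne']
  have hqδ0 : S1 * q = δ0 := by rw [hδ0, hq]; ring
  have hqη : q * S3 / S2 = η := by rw [hη, hq]; field_simp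
  have hη_nonneg : 0 ≤ η := hqη ▸ div_nonneg (mul_nonneg hq_pos.le hS3_nonneg) hS2_pos.le
  have hη_le : η ≤ 1 / 4 := by
    rw [← hqη, div_le_iff₀ hS2_pos]
    linarith [mul_le_mul_of_nonneg_right hqΔ hS3_nonneg]
  have hqS3 : q * S3 = η * S2 := (div_eq_iff hS2_pos.ne').1 hqη
  have solutions := exists_secular_solutions_of_scale (η := η) hp hx (hS1 ▸ hS1_pos) hq_pos
    (fun i => by linarith [hΔx i]) hη_nonneg hη_le (hS2 ▸ hS3 ▸ hqS3.le)
  rwa [← hS1, ← hS2, hqε, mul_neg, mul_left_comm, mul_left_comm S1 (-(1 - η)), hqδ0] at solutions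

end Resolvent

/-- There exists `c > 0` such that, for every `n ≥ 2` (dimension `n + 2`
here), all reals `0 ≤ λ_1 ≤ … ≤ λ_{n−1} < λ_n = 1` and complex `a` with `∑ |a i|² = 1` and
`ε = |a_n|² > 0`, setting `Δ = 1 − λ_{n−1}`, `S_k = ∑_{i<n} |a i|²/(1−λ i)^k`,
`δ₀ = √ε·S₁/√S₂` and `η = √ε·S₃/S₂^{3/2}`: if `√ε ≤ c·min(S₁S₂/S₃, Δ√S₂)`, then the secular
equation `ε/δ + ∑_{i<n} |a i|²/(S₁(1−λ i) + δ) = 1` has a solution `δ₊ ∈ [(1−η)δ₀, (1+η)δ₀]`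
and a solution `δ₋ ∈ [−(1+η)δ₀, −(1−η)δ₀]`. -/
theorem exists_secular_solutions_near_delta0 :
    ∃ c : ℝ, 0 < c ∧
      ∀ (n : ℕ) (lam : Fin (n + 2) → ℝ) (a : Fin (n + 2) → ℂ),
        Monotone lam → (∀ i, 0 ≤ lam i) →
        lam ((Fin.last n).castSucc) < 1 → lam (Fin.last (n + 1)) = 1 →
        (∑ i, ‖a i‖ ^ 2) = 1 →
        ∀ ε Δ S1 S2 S3 δ0 η : ℝ,
          ε = ‖a (Fin.last (n + 1))‖ ^ 2 → 0 < ε →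
          Δ = 1 - lam ((Fin.last n).castSucc) →
          S1 = (∑ i : Fin (n + 1), ‖a i.castSucc‖ ^ 2 / (1 - lam i.castSucc)) →
          S2 = (∑ i : Fin (n + 1), ‖a i.castSucc‖ ^ 2 / (1 - lam i.castSucc) ^ 2) →
          S3 = (∑ i : Fin (n + 1), ‖a i.castSucc‖ ^ 2 / (1 - lam i.castSucc) ^ 3) →
          δ0 = Real.sqrt ε * S1 / Real.sqrt S2 →
          η = Real.sqrt ε * S3 / (S2 * Real.sqrt S2) →
          Real.sqrt ε ≤ c * min (S1 * S2 / S3) (Δ * Real.sqrt S2) →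
          (∃ δp : ℝ, (1 - η) * δ0 ≤ δp ∧ δp ≤ (1 + η) * δ0 ∧
            ε / δp + (∑ i : Fin (n + 1),
              ‖a i.castSucc‖ ^ 2 / (S1 * (1 - lam i.castSucc) + δp)) = 1) ∧
          (∃ δm : ℝ, -(1 + η) * δ0 ≤ δm ∧ δm ≤ -(1 - η) * δ0 ∧
            ε / δm + (∑ i : Fin (n + 1),
              ‖a i.castSucc‖ ^ 2 / (S1 * (1 - lam i.castSucc) + δm)) = 1) := by
  refine ⟨1 / 4, by norm_num, ?_⟩
  intro n lam a hmono _ hlt _ _ ε Δ S1 S2 S3 δ0 η _ hε hΔ hS1 hS2 hS3 hδ0 hη hcond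
  have hΔ_pos : 0 < Δ := by linarith
  have hΔ_le : ∀ i : Fin (n + 1), Δ ≤ 1 - lam i.castSucc := fun i => by
    linarith [hmono (Fin.castSucc_le_castSucc_iff.2 (Fin.le_last i))]
  have hgap : √ε ≤ 1 / 4 * (Δ * √S2) :=
    hcond.trans (mul_le_mul_of_nonneg_left (min_le_right _ _) (by norm_num))
  obtain ⟨⟨δp, hδp, hsecp⟩, ⟨δm, hδm, hsecm⟩⟩ := exists_secular_solutions_near_delta0_general
    (fun _ => sq_nonneg _) hΔ_pos hΔ_le hε hS1 hS2 hS3 hδ0 hη hgap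
  exact ⟨⟨δp, by linarith [hδp.1, hδp.2], hδp.2, hsecp⟩,
    ⟨δm, by linarith [hδm.1, hδm.2], hδm.2, hsecm⟩⟩
end

section
/- Let A be an n×n complex matrix and Q an n×n orthogonal projection matrix (Q² = Q = Q*) such that A = Q·A·Q, and let w ∈ ℂ^n be a unit vector with P_w = |w⟩⟨w| the orthogonal projection onto its span. Then the operator norm of the commutator satisfies ‖P_w·A − A·P_w‖ ≤ 2·‖A‖·‖Q w‖. -/
open Matrix BigOperators

open InnerProductSpace

/-!
Since `A = Q A Q`, only the part of `w` seen by `Q` interacts with `A`: writing `P_w A = (P_w Q) A`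
and `A P_w = A (Q P_w)`, the operators `P_w Q = |w⟩⟨Q w|` and `Q P_w = |Q w⟩⟨w|` have norm
`‖w‖ ‖Q w‖`, and the triangle inequality gives the factor `2`.
-/

section RankOne

variable {𝕜 E : Type*} [RCLike 𝕜] [SeminormedAddCommGroup E] [InnerProductSpace 𝕜 E]

theorem rankOne_mul_of_isSymmetric {Q : E →L[𝕜] E} (hQ : Q.IsSymmetric) (x y : E) :
    rankOne 𝕜 x y * Q = rankOne 𝕜 x (Q y) := by
  ext z
  exact congrArg (· • x) (hQ y z).symm

theorem norm_rankOne_mul_sub_mul_rankOne_le {A Q : E →L[𝕜] E} (hQ : Q.IsSymmetric)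
    (hQA : Q * A = A) (hAQ : A * Q = A) (x y : E) :
    ‖rankOne 𝕜 x y * A - A * rankOne 𝕜 x y‖ ≤ ‖A‖ * (‖x‖ * ‖Q y‖ + ‖Q x‖ * ‖y‖) := by
  have left_factor : rankOne 𝕜 x y * A = rankOne 𝕜 x (Q y) * A := by
    rw [← rankOne_mul_of_isSymmetric hQ, mul_assoc, hQA]
  have right_factor : A * rankOne 𝕜 x y = A * rankOne 𝕜 (Q x) y := by
    rw [← comp_rankOne, ← ContinuousLinearMap.mul_def, ← mul_assoc, hAQ]
  calc ‖rankOne 𝕜 x y * A - A * rankOne 𝕜 x y‖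
      = ‖rankOne 𝕜 x (Q y) * A - A * rankOne 𝕜 (Q x) y‖ := by rw [left_factor, right_factor]
    _ ≤ ‖rankOne 𝕜 x (Q y)‖ * ‖A‖ + ‖A‖ * ‖rankOne 𝕜 (Q x) y‖ :=
      norm_sub_le_of_le (norm_mul_le _ _) (norm_mul_le _ _)
    _ = ‖A‖ * (‖x‖ * ‖Q y‖ + ‖Q x‖ * ‖y‖) := by
      rw [norm_rankOne, norm_rankOne]
      ring

theorem commutator_norm_bound_general {A Q : E →L[𝕜] E} (hQ : Q.IsSymmetricProjection)
    (hA : A = Q * A * Q) (w : E) :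
    ‖rankOne 𝕜 w w * A - A * rankOne 𝕜 w w‖ ≤ 2 * ‖A‖ * (‖w‖ * ‖Q w‖) := by
  have hQidem : IsIdempotentElem Q :=
    ContinuousLinearMap.isIdempotentElem_toLinearMap_iff.mp hQ.isIdempotentElem
  obtain ⟨hQA, hAQ⟩ := (Subsemigroup.mem_corner_iff hQidem).mp ⟨A, hA.symm⟩
  refine (norm_rankOne_mul_sub_mul_rankOne_le hQ.isSymmetric hQA hAQ w w).trans_eq ?_
  ring

end RankOne

section EuclideanSpace

variable {𝕜 ι : Type*} [RCLike 𝕜] [Fintype ι]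

theorem norm_toLp_eq_one_of_star_dotProduct_self {w : ι → 𝕜} (hw : star w ⬝ᵥ w = 1) :
    ‖WithLp.toLp 2 w‖ = 1 := by
  have inner_self : inner 𝕜 (WithLp.toLp 2 w) (WithLp.toLp 2 w) = 1 := by
    rw [EuclideanSpace.inner_toLp_toLp, dotProduct_comm, hw]
  rw [norm_eq_sqrt_re_inner (𝕜 := 𝕜), inner_self, RCLike.one_re, Real.sqrt_one]

theorem toEuclideanCLM_vecMulVec_star [DecidableEq ι] (x y : ι → 𝕜) :
    toEuclideanCLM (𝕜 := 𝕜) (vecMulVec x (star y)) =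
      rankOne 𝕜 (WithLp.toLp 2 x) (WithLp.toLp 2 y) := by
  apply ContinuousLinearMap.coe_injective
  rw [coe_toEuclideanCLM_eq_toEuclideanLin, ← LinearEquiv.eq_symm_apply,
    symm_toEuclideanLin_rankOne]

theorem isSymmetricProjection_toEuclideanCLM [DecidableEq ι] {Q : Matrix ι ι 𝕜}
    (hQ : IsStarProjection Q) : (toEuclideanCLM (𝕜 := 𝕜) Q).IsSymmetricProjection :=
  ContinuousLinearMap.isStarProjection_iff_isSymmetricProjection.mp (hQ.map _)

end EuclideanSpace

/-- Let `A` be an `n×n` complex matrix and `Q` an orthogonal projection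
(`Q² = Q = Qᴴ`) with `A = Q·A·Q`, and let `w` be a unit vector with `P_w = |w⟩⟨w|`. Then, in
the operator norm induced by the Euclidean norm,
`‖P_w·A − A·P_w‖ ≤ 2·‖A‖·‖Q w‖`, where `‖Q w‖` is the Euclidean norm of `Q w`. -/
theorem commutator_norm_bound
    (n : ℕ) (A Q : Matrix (Fin n) (Fin n) ℂ)
    (hQidem : Q * Q = Q) (hQherm : Qᴴ = Q)
    (hA : A = Q * A * Q)
    (w : Fin n → ℂ) (hw : star w ⬝ᵥ w = 1)
    (Pw : Matrix (Fin n) (Fin n) ℂ)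
    (hPw : Pw = Matrix.vecMulVec w (star w)) :
    ‖Matrix.toEuclideanCLM (𝕜 := ℂ) (Pw * A - A * Pw)‖ ≤
      2 * ‖Matrix.toEuclideanCLM (𝕜 := ℂ) A‖ *
        ‖(WithLp.equiv 2 (Fin n → ℂ)).symm (Q.mulVec w)‖ := by
  have bound := commutator_norm_bound_general
    (isSymmetricProjection_toEuclideanCLM (𝕜 := ℂ) ⟨hQidem, hQherm⟩)
    (A := toEuclideanCLM (𝕜 := ℂ) A) (by rw [← map_mul, ← map_mul, ← hA]) (WithLp.toLp 2 w)
  rwa [norm_toLp_eq_one_of_star_dotProduct_self hw, one_mul, toEuclideanCLM_toLp,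
    ← toEuclideanCLM_vecMulVec_star, ← hPw, ← map_mul, ← map_mul, ← map_sub] at bound
end
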